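/- arXiv:1504.00954 — 10 statements merged into one kernel-verified Lean document; each statement's English description precedes it below -/
import Mathlib

section
/- Let G be a finite simple graph with m edges, and let ≺ be the strict total order on vertices defined by u ≺ v iff deg(u) < deg(v), or deg(u) = deg(v) and u < v in a fixed linear order on the vertex set. Then for every vertex v, the number of neighbors w of v with v ≺ w is at most √(2m); equivalently, (card {w ∈ Γ(v) : v ≺ w})² ≤ 2m. -/
open Finset SimpleGraph

/-- The degree-then-label strict total order on vertices: `u ≺ v` iff
`deg u < deg v`, or `deg u = deg v` and `u < v` in a fixed linear order. -/
abbrev prec {V : Type*} [Fintype V] [LinearOrder V] (G : SimpleGraph V)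
    [DecidableRel G.Adj] (u v : V) : Prop :=
  G.degree u < G.degree v ∨ (G.degree u = G.degree v ∧ u < v)

theorem degree_le_degree_of_prec {V : Type*} [Fintype V] [LinearOrder V] {G : SimpleGraph V}
    [DecidableRel G.Adj] {u v : V} (h : prec G u v) : G.degree u ≤ G.degree v :=
  h.elim le_of_lt fun h_eq => h_eq.1.le

section DegreeSum

variable {V : Type*} [Fintype V] (G : SimpleGraph V) [DecidableRel G.Adj]

theorem sum_degree_le_two_mul_card_edgeFinset (s : Finset V) :
    ∑ w ∈ s, G.degree w ≤ 2 * #G.edgeFinset := by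
  rw [← G.sum_degrees_eq_twice_card_edges]
  exact sum_le_sum_of_subset s.subset_univ

variable {G} in
theorem card_mul_le_two_mul_card_edgeFinset_of_le_degree {s : Finset V} {d : ℕ}
    (hs : ∀ w ∈ s, d ≤ G.degree w) : #s * d ≤ 2 * #G.edgeFinset :=
  calc
    #s * d ≤ ∑ w ∈ s, G.degree w := card_nsmul_le_sum s _ d hs
    _ ≤ 2 * #G.edgeFinset := sum_degree_le_two_mul_card_edgeFinset G s

theorem card_prec_neighbors_sq_le_two_mul_edges_general (v : V) :
    #{w ∈ G.neighborFinset v | G.degree v ≤ G.degree w} ^ 2 ≤ 2 * #G.edgeFinset := by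
  set s := {w ∈ G.neighborFinset v | G.degree v ≤ G.degree w}
  have card_le_degree : #s ≤ G.degree v := card_filter_le _ _
  have degree_le : ∀ w ∈ s, G.degree v ≤ G.degree w := fun _ hw => (mem_filter.mp hw).2
  calc
    #s ^ 2 = #s * #s := sq _
    _ ≤ #s * G.degree v := by gcongr
    _ ≤ 2 * #G.edgeFinset := card_mul_le_two_mul_card_edgeFinset_of_le_degree degree_le

end DegreeSum

/-- For every vertex `v`, the number of neighbors `w` of `v` with `v ≺ w`
is at most `√(2m)`, i.e. its square is at most `2m`. -/
theorem card_prec_neighbors_sq_le_two_mul_edges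
    {V : Type*} [Fintype V] [LinearOrder V]
    (G : SimpleGraph V) [DecidableRel G.Adj] (v : V) :
    ((G.neighborFinset v).filter (fun w => prec G v w)).card ^ 2
      ≤ 2 * G.edgeFinset.card := by
  grw [← card_prec_neighbors_sq_le_two_mul_edges_general G v]
  gcongr with w; exact degree_le_degree_of_prec
end

section
/- Let G be a finite simple graph with m edges and ≺ the degree-then-label order on its vertices. Then for every vertex v, Σ_{x ∈ Γ(v)} (t_{(v,x)})² ≤ √(2m) · t_v, where t_{(v,x)} is the number of vertices w with {v,x,w} a triangle and x ≺ w, and t_v is the number of triangles containing v. -/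
open Finset SimpleGraph

/-!
Write `t` for `t_{(v,x)}`. Each of the `t` vertices `w` counted has `deg w ≥ deg x ≥ t`, so the
degree sum `2m` is at least `t²`, i.e. `t ≤ √(2m)`. Hence `∑ t² ≤ √(2m) ∑ t`, and `∑ t ≤ t_v`
because `≺` orders the two vertices other than `v` of a triangle in at most one way.
-/

section OrderedPairs

variable {α : Type*} [DecidableEq α] (r : α → α → Prop) [Std.Antisymm r]

theorem injOn_pair_of_antisymm :
    Set.InjOn (fun p : α × α ↦ ({p.1, p.2} : Finset α)) {p | r p.1 p.2} := by
  rintro ⟨x, w⟩ hxw ⟨x', w'⟩ hxw' h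
  have hpair : ({x, w} : Set α) = {x', w'} := by
    simpa only [coe_pair] using coe_inj.2 h
  rcases Set.pair_eq_pair_iff.1 hpair with ⟨rfl, rfl⟩ | ⟨rfl, rfl⟩
  · rfl
  · have hxw_eq : x = w := antisymm_of r hxw hxw'
    rw [hxw_eq]

theorem injOn_insert_pair_of_antisymm (a : α) :
    Set.InjOn (fun p : α × α ↦ ({a, p.1, p.2} : Finset α))
      {p | a ≠ p.1 ∧ a ≠ p.2 ∧ r p.1 p.2} :=
  (insert_erase_invOn (a := a)).2.injOn.comp
    ((injOn_pair_of_antisymm r).mono fun _ hp ↦ hp.2.2)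
    fun p hp ↦ by simp [hp.1, hp.2.1]

end OrderedPairs

section Triangles

variable {V : Type*} [Fintype V] (G : SimpleGraph V) [DecidableRel G.Adj]

theorem sq_card_le_two_mul_card_edgeFinset {s : Finset V} (hs : ∀ w ∈ s, #s ≤ G.degree w) :
    #s ^ 2 ≤ 2 * #G.edgeFinset :=
  calc
    #s ^ 2 = #s • #s := by rw [sq, smul_eq_mul]
    _ ≤ ∑ w ∈ s, G.degree w := card_nsmul_le_sum s _ _ hs
    _ ≤ ∑ w, G.degree w := sum_le_sum_of_subset (subset_univ s)
    _ = 2 * #G.edgeFinset := G.sum_degrees_eq_twice_card_edges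

variable (r : V → V → Prop) [DecidableRel r]

/-- The vertices completing the edge `vx` to a triangle and lying `r`-after `x`; when `r` is `≺`,
there are `t_{(v,x)}` of them. The adjacency of `v` and `x` is left to the context. -/
def triangleApexes (v x : V) : Finset V :=
  {w | G.Adj v w ∧ G.Adj x w ∧ r x w}

variable {G r}

theorem mem_triangleApexes {v x w : V} :
    w ∈ triangleApexes G r v x ↔ G.Adj v w ∧ G.Adj x w ∧ r x w :=
  mem_filter_univ w

theorem card_triangleApexes_le_degree (v x : V) : #(triangleApexes G r v x) ≤ G.degree x :=
  card_le_card fun w hw ↦ (G.mem_neighborFinset x w).2 (mem_triangleApexes.1 hw).2.1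

theorem card_triangleApexes_le_sqrt (hr : ∀ ⦃x w⦄, r x w → G.degree x ≤ G.degree w) (v x : V) :
    (#(triangleApexes G r v x) : ℝ) ≤ √(2 * #G.edgeFinset) := by
  have hsq : #(triangleApexes G r v x) ^ 2 ≤ 2 * #G.edgeFinset :=
    sq_card_le_two_mul_card_edgeFinset G fun w hw ↦
      (card_triangleApexes_le_degree v x).trans (hr (mem_triangleApexes.1 hw).2.2)
  exact Real.le_sqrt_of_sq_le (mod_cast hsq)

variable [DecidableEq V] [Std.Antisymm r]

variable (G r) in
theorem sum_card_triangleApexes_le (v : V) :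
    ∑ x ∈ G.neighborFinset v, #(triangleApexes G r v x) ≤
      #{Δ ∈ G.cliqueFinset 3 | v ∈ Δ} := by
  rw [← card_sigma]
  refine card_le_card_of_injOn (fun p ↦ {v, p.1, p.2}) ?_ ?_
  · rintro ⟨x, w⟩ hp
    obtain ⟨hx, hw⟩ := mem_sigma.1 hp
    obtain ⟨hvw, hxw, -⟩ := mem_triangleApexes.1 hw
    have hvx : G.Adj v x := (G.mem_neighborFinset v x).1 hx
    exact mem_filter.2 ⟨G.mem_cliqueFinset_iff.2 (is3Clique_triple_iff.2 ⟨hvx, hvw, hxw⟩),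
      mem_insert_self v _⟩
  · refine (injOn_insert_pair_of_antisymm r v).comp
      (Equiv.sigmaEquivProd V V).injective.injOn ?_
    rintro ⟨x, w⟩ hp
    obtain ⟨hx, hw⟩ := mem_sigma.1 hp
    obtain ⟨hvw, -, hr⟩ := mem_triangleApexes.1 hw
    exact ⟨((G.mem_neighborFinset v x).1 hx).ne, hvw.ne, hr⟩

theorem sum_sq_assoc_le_sqrt_two_m_mul_tv_general
    (hr : ∀ ⦃x w⦄, r x w → G.degree x ≤ G.degree w) (v : V) :
    ∑ x ∈ G.neighborFinset v, (#(triangleApexes G r v x) : ℝ) ^ 2 ≤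
      √(2 * #G.edgeFinset) * #{Δ ∈ G.cliqueFinset 3 | v ∈ Δ} :=
  calc
    ∑ x ∈ G.neighborFinset v, (#(triangleApexes G r v x) : ℝ) ^ 2
      ≤ ∑ x ∈ G.neighborFinset v, √(2 * #G.edgeFinset) * #(triangleApexes G r v x) := by
        gcongr with x
        rw [sq]
        gcongr
        exact card_triangleApexes_le_sqrt hr v x
    _ = √(2 * #G.edgeFinset) * ↑(∑ x ∈ G.neighborFinset v, #(triangleApexes G r v x)) := by
        rw [Nat.cast_sum, mul_sum]
    _ ≤ √(2 * #G.edgeFinset) * #{Δ ∈ G.cliqueFinset 3 | v ∈ Δ} := by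
        gcongr
        exact sum_card_triangleApexes_le G r v

end Triangles

section Prec

variable {V : Type*} [Fintype V] [LinearOrder V] {G : SimpleGraph V} [DecidableRel G.Adj]

theorem prec_iff_toLex_lt {u v : V} :
    prec G u v ↔ toLex (G.degree u, u) < toLex (G.degree v, v) :=
  (Prod.Lex.toLex_lt_toLex (x := (G.degree u, u)) (y := (G.degree v, v))).symm

instance prec_antisymm : Std.Antisymm (prec G) where
  antisymm _ _ huv hvu := (lt_asymm (prec_iff_toLex_lt.1 huv) (prec_iff_toLex_lt.1 hvu)).elim

theorem degree_le_of_prec {u v : V} (h : prec G u v) : G.degree u ≤ G.degree v :=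
  h.elim le_of_lt fun huv ↦ huv.1.le

end Prec

/-- For every vertex `v`, the sum over the neighbors `x` of `v` of
`t_{(v,x)}²` is at most `√(2m) · t_v`. -/
theorem sum_sq_assoc_le_sqrt_two_m_mul_tv
    {V : Type*} [Fintype V] [LinearOrder V]
    (G : SimpleGraph V) [DecidableRel G.Adj] (v : V) :
    ∑ x ∈ G.neighborFinset v,
        (((Finset.univ.filter
            (fun w => G.Adj v w ∧ G.Adj x w ∧ prec G x w)).card : ℝ)) ^ 2
      ≤ Real.sqrt (2 * G.edgeFinset.card) *
          (((G.cliqueFinset 3).filter (fun Δ => v ∈ Δ)).card : ℝ) :=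
  sum_sq_assoc_le_sqrt_two_m_mul_tv_general (r := prec G) (fun _ _ ↦ degree_le_of_prec) v
end

section
/- For every finite simple graph G with m edges, the number t of triangles of G satisfies t ≤ (4/3) · m^{3/2}. -/
open Finset SimpleGraph

/-!
In a graph with `m` edges, let `k_r` be the number of `r`-cliques and `k_r(v)` the number of those
contained in the neighbourhood of `v`. Counting pairs of an `(r + 1)`-clique and one of its vertices
gives `(r + 1) k_{r+1} = ∑ v, k_r(v)`. The bound `r! k_r ≤ (2m)^{r/2}` is an equality for `r = 2`.
If it holds for `r`, then `r! k_r(v) ≤ (2 k_2(v))^{r/2}`, where `k_2(v)` is at most `m` and at most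
`deg(v)² / 2`. Using the second bound for one factor `√(2 k_2(v))` and the first for the others,
`r! k_r(v) ≤ (2m)^{(r-1)/2} deg(v)`, and summing over `v` gives `(r + 1)! k_{r+1} ≤ (2m)^{(r+1)/2}`.
-/

section CliquesIn

variable {V : Type*} [DecidableEq V] (G : SimpleGraph V) [DecidableRel G.Adj]

/-- The cliques with `r` vertices of the subgraph of `G` induced on `S`, kept as sets of vertices
of `G` so that different `S` can be compared directly. -/
def cliquesIn (S : Finset V) (r : ℕ) : Finset (Finset V) :=
  {s ∈ S.powersetCard r | G.IsClique s}

variable {G} in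
lemma mem_cliquesIn {S s : Finset V} {r : ℕ} :
    s ∈ cliquesIn G S r ↔ s ⊆ S ∧ #s = r ∧ G.IsClique s := by
  rw [cliquesIn, mem_filter, mem_powersetCard, and_assoc]

lemma cliquesIn_mono {S T : Finset V} (hST : S ⊆ T) (r : ℕ) :
    cliquesIn G S r ⊆ cliquesIn G T r :=
  filter_subset_filter _ (powersetCard_mono hST)

lemma card_cliquesIn_one (S : Finset V) : #(cliquesIn G S 1) = #S := by
  have hclique : ∀ s ∈ S.powersetCard 1, G.IsClique s := by
    intro s hs
    obtain ⟨v, rfl⟩ := card_eq_one.1 (mem_powersetCard.1 hs).2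
    simp
  rw [cliquesIn, filter_true_of_mem hclique, card_powersetCard, Nat.choose_one_right]

lemma factorial_mul_card_cliquesIn_le_pow (S : Finset V) (r : ℕ) :
    r.factorial * #(cliquesIn G S r) ≤ #S ^ r :=
  calc r.factorial * #(cliquesIn G S r)
      ≤ r.factorial * #(S.powersetCard r) := by gcongr; exact filter_subset _ _
    _ = (#S).descFactorial r := by
      rw [card_powersetCard, Nat.descFactorial_eq_factorial_mul_choose]
    _ ≤ #S ^ r := Nat.descFactorial_le_pow _ _

lemma erase_mem_cliquesIn_filter_adj {S s : Finset V} {v : V} {r : ℕ}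
    (hs : s ∈ cliquesIn G S (r + 1)) (hv : v ∈ s) :
    s.erase v ∈ cliquesIn G {w ∈ S | G.Adj v w} r := by
  obtain ⟨hsS, hcard, hclique⟩ := mem_cliquesIn.1 hs
  refine mem_cliquesIn.2 ⟨fun w hw ↦ ?_, by rw [card_erase_of_mem hv, hcard, Nat.add_sub_cancel],
    hclique.subset (coe_subset.2 (erase_subset v s))⟩
  obtain ⟨hwv, hws⟩ := mem_erase.1 hw
  exact mem_filter.2 ⟨hsS hws, hclique hv hws hwv.symm⟩

lemma insert_mem_cliquesIn {S s : Finset V} {v : V} {r : ℕ} (hv : v ∈ S)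
    (hs : s ∈ cliquesIn G {w ∈ S | G.Adj v w} r) (hvs : v ∉ s) :
    insert v s ∈ cliquesIn G S (r + 1) := by
  obtain ⟨hsub, hcard, hclique⟩ := mem_cliquesIn.1 hs
  refine mem_cliquesIn.2 ⟨insert_subset hv (hsub.trans (filter_subset _ _)),
    by rw [card_insert_of_notMem hvs, hcard], ?_⟩
  rw [coe_insert]
  exact hclique.insert fun w hw _ ↦ (mem_filter.1 (hsub hw)).2

lemma card_filter_mem_cliquesIn {S : Finset V} {v : V} (hv : v ∈ S) (r : ℕ) :
    #{s ∈ cliquesIn G S (r + 1) | v ∈ s} = #(cliquesIn G {w ∈ S | G.Adj v w} r) := by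
  have hnotMem : ∀ s ∈ cliquesIn G {w ∈ S | G.Adj v w} r, v ∉ s := fun s hs hvs ↦
    G.irrefl (mem_filter.1 ((mem_cliquesIn.1 hs).1 hvs)).2
  refine card_nbij' (fun s ↦ s.erase v) (fun s ↦ insert v s) ?_ ?_ ?_ ?_
  · exact fun s hs ↦ erase_mem_cliquesIn_filter_adj G (mem_filter.1 hs).1 (mem_filter.1 hs).2
  · exact fun s hs ↦ mem_filter.2
      ⟨insert_mem_cliquesIn G hv hs (hnotMem s hs), mem_insert_self v s⟩
  · exact fun s hs ↦ insert_erase (mem_filter.1 hs).2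
  · exact fun s hs ↦ erase_insert (hnotMem s hs)

lemma sum_card_cliquesIn_filter_adj (S : Finset V) (r : ℕ) :
    ∑ v ∈ S, #(cliquesIn G {w ∈ S | G.Adj v w} r) = (r + 1) * #(cliquesIn G S (r + 1)) :=
  calc ∑ v ∈ S, #(cliquesIn G {w ∈ S | G.Adj v w} r)
      = ∑ v ∈ S, #{s ∈ cliquesIn G S (r + 1) | v ∈ s} :=
        sum_congr rfl fun _ hv ↦ (card_filter_mem_cliquesIn G hv r).symm
    _ = ∑ s ∈ cliquesIn G S (r + 1), #{v ∈ S | v ∈ s} :=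
        sum_card_bipartiteAbove_eq_sum_card_bipartiteBelow (· ∈ ·)
    _ = ∑ s ∈ cliquesIn G S (r + 1), (r + 1) := by
        refine sum_congr rfl fun s hs ↦ ?_
        obtain ⟨hsS, hcard, -⟩ := mem_cliquesIn.1 hs
        rw [filter_mem_eq_inter, inter_eq_right.2 hsS, hcard]
    _ = (r + 1) * #(cliquesIn G S (r + 1)) := by rw [sum_const, smul_eq_mul, mul_comm]

lemma sum_card_filter_adj (S : Finset V) :
    ∑ v ∈ S, #{w ∈ S | G.Adj v w} = 2 * #(cliquesIn G S 2) := by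
  simpa only [card_cliquesIn_one] using sum_card_cliquesIn_filter_adj G S 1

lemma sqrt_two_mul_card_cliquesIn_two_le_card (S : Finset V) :
    √(2 * #(cliquesIn G S 2) : ℝ) ≤ #S := by
  refine Real.sqrt_le_left (Nat.cast_nonneg _) |>.2 ?_
  exact_mod_cast factorial_mul_card_cliquesIn_le_pow G S 2

theorem factorial_mul_card_cliquesIn_le_sqrt_pow (S : Finset V) (k : ℕ) :
    ((k + 2).factorial * #(cliquesIn G S (k + 2)) : ℝ) ≤ √(2 * #(cliquesIn G S 2)) ^ (k + 2) := by
  induction k generalizing S with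
  | zero => rw [zero_add, Real.sq_sqrt (by positivity), Nat.factorial_two, Nat.cast_two]
  | succ k ih =>
    set M : ℝ := 2 * #(cliquesIn G S 2) with hM
    have hlink (v : V) : ((k + 2).factorial * #(cliquesIn G {w ∈ S | G.Adj v w} (k + 2)) : ℝ)
        ≤ √M ^ (k + 1) * #{w ∈ S | G.Adj v w} := by
      refine (ih _).trans ?_
      have hmono : (2 * #(cliquesIn G {w ∈ S | G.Adj v w} 2) : ℝ) ≤ M := by
        rw [hM]
        gcongr
        exact cliquesIn_mono G (filter_subset _ S) 2
      rw [pow_succ]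
      gcongr
      exact sqrt_two_mul_card_cliquesIn_two_le_card G _
    calc ((k + 3).factorial * #(cliquesIn G S (k + 3)) : ℝ)
        = ∑ v ∈ S, ((k + 2).factorial * #(cliquesIn G {w ∈ S | G.Adj v w} (k + 2)) : ℝ) := by
          rw [← mul_sum, ← Nat.cast_sum, sum_card_cliquesIn_filter_adj, Nat.factorial_succ (k + 2)]
          push_cast
          ring
      _ ≤ ∑ v ∈ S, √M ^ (k + 1) * #{w ∈ S | G.Adj v w} := sum_le_sum fun v _ ↦ hlink v
      _ = √M ^ (k + 1) * M := by
          rw [← mul_sum, ← Nat.cast_sum, sum_card_filter_adj, hM, Nat.cast_mul, Nat.cast_two]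
      _ = √M ^ (k + 3) := by
          rw [pow_add √M (k + 1) 2, Real.sq_sqrt (by positivity)]

variable [Fintype V]

lemma cliquesIn_univ (r : ℕ) : cliquesIn G univ r = G.cliqueFinset r := by
  ext s
  simp only [mem_cliquesIn, subset_univ, true_and, mem_cliqueFinset_iff, isNClique_iff, and_comm]

lemma card_cliquesIn_univ_two : #(cliquesIn G univ 2) = #G.edgeFinset := by
  refine Nat.eq_of_mul_eq_mul_left two_pos ?_
  rw [← sum_card_filter_adj, ← G.sum_degrees_eq_twice_card_edges]
  simp only [← card_neighborFinset_eq_degree, neighborFinset_eq_filter]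

end CliquesIn

theorem card_triangles_le_four_thirds_m_pow_general
    {V : Type*} [Fintype V] [DecidableEq V]
    (G : SimpleGraph V) [DecidableRel G.Adj] {r : ℕ} (hr : 2 ≤ r) :
    (r.factorial * #(G.cliqueFinset r) : ℝ) ≤ (2 * #G.edgeFinset : ℝ) ^ ((r : ℝ) / 2) := by
  obtain ⟨k, rfl⟩ := Nat.exists_eq_add_of_le' hr
  rw [Real.rpow_div_two_eq_sqrt _ (by positivity), Real.rpow_natCast,
    ← card_cliquesIn_univ_two, ← cliquesIn_univ]
  exact factorial_mul_card_cliquesIn_le_sqrt_pow G univ k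

theorem card_cliqueFinset_three_le {V : Type*} [Fintype V] [DecidableEq V]
    (G : SimpleGraph V) [DecidableRel G.Adj] :
    (#(G.cliqueFinset 3) : ℝ) ≤ √2 / 3 * (#G.edgeFinset : ℝ) ^ ((3 : ℝ) / 2) := by
  have htwo : (2 : ℝ) ^ ((3 : ℝ) / 2) = 2 * √2 := by
    rw [Real.sqrt_eq_rpow, show (3 : ℝ) / 2 = 1 + 1 / 2 by norm_num,
      Real.rpow_add two_pos, Real.rpow_one]
  have hsix : 6 * (#(G.cliqueFinset 3) : ℝ) ≤ 2 * √2 * (#G.edgeFinset : ℝ) ^ ((3 : ℝ) / 2) := by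
    simpa [Nat.factorial, Real.mul_rpow, htwo] using
      card_triangles_le_four_thirds_m_pow_general G (r := 3) (by norm_num)
  linarith

/-- The number of triangles of a finite simple graph with `m` edges is at most
`(4/3) · m^{3/2}`. -/
theorem card_triangles_le_four_thirds_m_pow
    {V : Type*} [Fintype V] [DecidableEq V]
    (G : SimpleGraph V) [DecidableRel G.Adj] :
    ((G.cliqueFinset 3).card : ℝ)
      ≤ (4 / 3) * (G.edgeFinset.card : ℝ) ^ ((3 : ℝ) / 2) := by
  refine (card_cliqueFinset_three_le G).trans ?_
  gcongr
  exact Real.sqrt_le_iff.2 (by norm_num)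
end

section
/- Let G be a finite simple graph with m edges and t ≥ 1 triangles. Let 0 < ε < 1 and let m̄, t̄ be positive reals with m̄ ≥ m/6 and t/4 ≤ t̄ ≤ t. Call a vertex v light if deg(v) ≤ 2m̄/(ε t̄)^{1/3} and t_v ≤ t̄^{2/3}/(2 ε^{1/3}). Then the number of triangles of G all three of whose vertices are non-light is at most 2000 · ε · t. -/
open Finset SimpleGraph

/-- A vertex `v` is light (w.r.t. `ε`, `m̄`, `t̄`) if
`deg v ≤ 2m̄/(ε t̄)^{1/3}` and `t_v ≤ t̄^{2/3}/(2 ε^{1/3})`. -/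
def IsLight {V : Type*} [Fintype V] [DecidableEq V]
    (G : SimpleGraph V) [DecidableRel G.Adj] (ε mbar tbar : ℝ) (v : V) : Prop :=
  (G.degree v : ℝ) ≤ 2 * mbar / (ε * tbar) ^ ((1 : ℝ) / 3) ∧
  (((G.cliqueFinset 3).filter (fun Δ => v ∈ Δ)).card : ℝ)
    ≤ tbar ^ ((2 : ℝ) / 3) / (2 * ε ^ ((1 : ℝ) / 3))

/-!
A non-light vertex has degree above `d = 2m̄/(ε t̄)^{1/3}` or lies in more than
`s = t̄^{2/3}/(2 ε^{1/3})` triangles. The degrees sum to `2m` and the `t_v` sum to `3t`, so by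
Markov's inequality there are at most `2m/d + 3t/s = (ε t̄)^{1/3} (m/m̄ + 6t/t̄)` non-light
vertices. A set of `h` vertices contains at most `h.choose 3 ≤ h³/6` triangles, and cubing turns
the factor `(ε t̄)^{1/3}` into the desired `ε t̄`.
-/

theorem card_filter_lt_le_sum_div {ι 𝕜 : Type*} [Field 𝕜] [LinearOrder 𝕜] [IsStrictOrderedRing 𝕜]
    {s : Finset ι} {f : ι → 𝕜} {c : 𝕜} (hf : ∀ i ∈ s, 0 ≤ f i) (hc : 0 < c) :
    (#{i ∈ s | c < f i} : 𝕜) ≤ (∑ i ∈ s, f i) / c := by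
  rw [le_div_iff₀ hc, ← nsmul_eq_mul]
  calc #{i ∈ s | c < f i} • c
      ≤ ∑ i ∈ s with c < f i, f i :=
        card_nsmul_le_sum _ _ _ fun _ hi => (mem_filter.1 hi).2.le
    _ ≤ ∑ i ∈ s, f i :=
        sum_le_sum_of_subset_of_nonneg (filter_subset _ _) fun i hi _ => hf i hi

theorem rpow_two_thirds_div_two_mul_rpow_third {a b : ℝ} (ha : 0 < a) (hb : 0 < b) :
    b ^ ((2 : ℝ) / 3) / (2 * a ^ ((1 : ℝ) / 3)) = b / (2 * (a * b) ^ ((1 : ℝ) / 3)) := by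
  have hsplit : b ^ ((2 : ℝ) / 3) * b ^ ((1 : ℝ) / 3) = b := by
    rw [← Real.rpow_add hb]; norm_num
  rw [Real.mul_rpow ha.le hb.le, div_eq_div_iff (by positivity) (by positivity)]
  linear_combination 2 * a ^ ((1 : ℝ) / 3) * hsplit

theorem mul_add_six_mul_div_pow_three_div_six_le {a b c t : ℝ} (hc : 0 ≤ c) (ha0 : 0 ≤ a)
    (ha : a ≤ 6) (hb : 0 < b) (hbt : b ≤ t) (htb : t ≤ 4 * b) :
    c * b * (a + 6 * (t / b)) ^ 3 / 6 ≤ 1125 * c * t := by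
  have hratio_ge : 1 ≤ t / b := (one_le_div hb).2 hbt
  have hratio_le : t / b ≤ 4 := (div_le_iff₀ hb).2 htb
  -- The difference of the two sides is `(4 - t / b) * ((t / b) ^ 2 + 7 * (t / b) - 1 / 4)`.
  have hcube : (1 + t / b) ^ 3 ≤ 125 / 4 * (t / b) := by
    have hquad : 0 ≤ (t / b) ^ 2 + 7 * (t / b) - 1 / 4 := by nlinarith
    linear_combination mul_nonneg (sub_nonneg.2 hratio_le) hquad
  calc c * b * (a + 6 * (t / b)) ^ 3 / 6
      ≤ c * b * (6 + 6 * (t / b)) ^ 3 / 6 := by gcongr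
    _ = 36 * c * b * (1 + t / b) ^ 3 := by ring
    _ ≤ 36 * c * b * (125 / 4 * (t / b)) := by gcongr
    _ = 1125 * c * t := by field_simp; ring

section Cliques

variable {V : Type*} [Fintype V] (G : SimpleGraph V) [DecidableRel G.Adj]

theorem card_degree_gt_le {d : ℝ} (hd : 0 < d) :
    (#{v | d < (G.degree v : ℝ)} : ℝ) ≤ 2 * #G.edgeFinset / d := by
  have handshake : ∑ v, (G.degree v : ℝ) = 2 * #G.edgeFinset := by
    exact_mod_cast G.sum_degrees_eq_twice_card_edges
  exact handshake ▸ card_filter_lt_le_sum_div (fun _ _ => Nat.cast_nonneg _) hd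

variable [DecidableEq V]

theorem sum_card_cliques_containing (r : ℕ) :
    ∑ v, #{K ∈ G.cliqueFinset r | v ∈ K} = #(G.cliqueFinset r) * r := by
  calc ∑ v, #{K ∈ G.cliqueFinset r | v ∈ K}
      = ∑ K ∈ G.cliqueFinset r, #{v | v ∈ K} :=
        sum_card_bipartiteAbove_eq_sum_card_bipartiteBelow (· ∈ ·)
    _ = #(G.cliqueFinset r) * r := by
        refine sum_const_nat fun K hK => ?_
        rw [filter_univ_mem, (mem_cliqueFinset_iff.1 hK).card_eq]

theorem card_cliques_containing_gt_le (r : ℕ) {s : ℝ} (hs : 0 < s) :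
    (#{v | s < (#{K ∈ G.cliqueFinset r | v ∈ K} : ℝ)} : ℝ) ≤ #(G.cliqueFinset r) * r / s := by
  have double_count :
      ∑ v, (#{K ∈ G.cliqueFinset r | v ∈ K} : ℝ) = #(G.cliqueFinset r) * r := by
    exact_mod_cast sum_card_cliques_containing G r
  exact double_count ▸ card_filter_lt_le_sum_div (fun _ _ => Nat.cast_nonneg _) hs

theorem card_cliques_forall_le_choose (r : ℕ) (p : V → Prop) [DecidablePred p] :
    #{K ∈ G.cliqueFinset r | ∀ v ∈ K, p v} ≤ (#{v | p v}).choose r := by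
  rw [← card_powersetCard]
  refine card_le_card fun K hK => ?_
  obtain ⟨hclique, hp⟩ := mem_filter.1 hK
  exact mem_powersetCard.2
    ⟨fun v hv => mem_filter.2 ⟨mem_univ v, hp v hv⟩, (mem_cliqueFinset_iff.1 hclique).card_eq⟩

theorem card_degree_gt_or_cliques_containing_gt_le (r : ℕ) {d s : ℝ} (hd : 0 < d) (hs : 0 < s) :
    (#{v | d < (G.degree v : ℝ) ∨ s < (#{K ∈ G.cliqueFinset r | v ∈ K} : ℝ)} : ℝ) ≤
      2 * #G.edgeFinset / d + #(G.cliqueFinset r) * r / s := by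
  rw [filter_or]
  refine (Nat.cast_le.2 (card_union_le _ _)).trans ?_
  rw [Nat.cast_add]
  exact add_le_add (card_degree_gt_le G hd) (card_cliques_containing_gt_le G r hs)

variable {G}

open scoped Classical in
theorem card_nonlight_le {ε mbar tbar : ℝ} (hε : 0 < ε) (hmbar : 0 < mbar) (htbar : 0 < tbar) :
    (#{v | ¬ IsLight G ε mbar tbar v} : ℝ) ≤
      (ε * tbar) ^ ((1 : ℝ) / 3) * (#G.edgeFinset / mbar + 6 * (#(G.cliqueFinset 3) / tbar)) := by
  set d : ℝ := 2 * mbar / (ε * tbar) ^ ((1 : ℝ) / 3) with hd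
  set s : ℝ := tbar ^ ((2 : ℝ) / 3) / (2 * ε ^ ((1 : ℝ) / 3)) with hs
  calc (#{v | ¬ IsLight G ε mbar tbar v} : ℝ)
      = #{v | d < (G.degree v : ℝ) ∨ s < (#{Δ ∈ G.cliqueFinset 3 | v ∈ Δ} : ℝ)} := by
        simp only [IsLight, not_and_or, not_le, d, s]
    _ ≤ 2 * #G.edgeFinset / d + #(G.cliqueFinset 3) * (3 : ℕ) / s :=
        card_degree_gt_or_cliques_containing_gt_le G 3 (by positivity) (by positivity)
    _ = _ := by
        rw [hd, hs, rpow_two_thirds_div_two_mul_rpow_third hε htbar]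
        field_simp
        push_cast
        ring

open scoped Classical in
theorem card_all_nonlight_triangles_le_general {ε mbar tbar : ℝ}
    (hε : 0 < ε) (hmbar : 0 < mbar) (htbar : 0 < tbar) :
    (#{Δ ∈ G.cliqueFinset 3 | ∀ v ∈ Δ, ¬ IsLight G ε mbar tbar v} : ℝ) ≤
      ε * tbar * (#G.edgeFinset / mbar + 6 * (#(G.cliqueFinset 3) / tbar)) ^ 3 / 6 := by
  set H : Finset V := {v | ¬ IsLight G ε mbar tbar v}
  set q : ℝ := #G.edgeFinset / mbar + 6 * (#(G.cliqueFinset 3) / tbar)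
  calc (#{Δ ∈ G.cliqueFinset 3 | ∀ v ∈ Δ, ¬ IsLight G ε mbar tbar v} : ℝ)
      ≤ (#H).choose 3 := mod_cast card_cliques_forall_le_choose G 3 _
    _ ≤ (#H : ℝ) ^ 3 / 6 := Nat.choose_le_pow_div 3 _
    _ ≤ ((ε * tbar) ^ ((1 : ℝ) / 3) * q) ^ 3 / 6 := by
        gcongr
        exact card_nonlight_le hε hmbar htbar
    _ = ε * tbar * q ^ 3 / 6 := by
        have hcube : ((ε * tbar) ^ ((1 : ℝ) / 3)) ^ 3 = ε * tbar := by
          rw [one_div]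
          exact Real.rpow_inv_natCast_pow (by positivity) three_ne_zero
        rw [mul_pow, hcube]

end Cliques

open scoped Classical in
/-- If `m̄ ≥ m/6` and `t/4 ≤ t̄ ≤ t`, then the number of triangles all of whose
vertices are non-light is at most `2000 · ε · t`. -/
theorem card_all_nonlight_triangles_le
    {V : Type*} [Fintype V] [DecidableEq V]
    (G : SimpleGraph V) [DecidableRel G.Adj]
    (ε mbar tbar : ℝ) (hε0 : 0 < ε) (hε1 : ε < 1)
    (hmbar0 : 0 < mbar) (htbar0 : 0 < tbar)
    (ht1 : 1 ≤ (G.cliqueFinset 3).card)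
    (hm : (G.edgeFinset.card : ℝ) / 6 ≤ mbar)
    (ht4 : ((G.cliqueFinset 3).card : ℝ) / 4 ≤ tbar)
    (htt : tbar ≤ ((G.cliqueFinset 3).card : ℝ)) :
    (((G.cliqueFinset 3).filter
        (fun Δ => ∀ v ∈ Δ, ¬ IsLight G ε mbar tbar v)).card : ℝ)
      ≤ 2000 * ε * ((G.cliqueFinset 3).card : ℝ) := by
  calc _ ≤ ε * tbar * (#G.edgeFinset / mbar + 6 * (#(G.cliqueFinset 3) / tbar)) ^ 3 / 6 :=
        card_all_nonlight_triangles_le_general hε0 hmbar0 htbar0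
    _ ≤ 1125 * ε * #(G.cliqueFinset 3) :=
        mul_add_six_mul_div_pow_three_div_six_le hε0.le (by positivity)
          ((div_le_iff₀ hmbar0).2 (by linarith)) htbar0 htt (by linarith)
    _ ≤ 2000 * ε * #(G.cliqueFinset 3) := by gcongr; norm_num
end

section
/- Let G be a finite simple graph with m edges and t ≥ 1 triangles. Let 0 < ε < 1 and let m̄, t̄ be positive reals with m̄ ≥ m/6 and t/4 ≤ t̄ ≤ t. Let (H, L) be a partition of the vertex set such that every heavy vertex belongs to H and every light vertex belongs to L (an appropriate partition). Then (1 − 2000·ε)·t ≤ Σ_{v ∈ L} wt(v) ≤ t. -/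
open Finset SimpleGraph

/-- A vertex `v` is heavy (w.r.t. `ε`, `m̄`, `t̄`) if
`deg v > 2m̄/(ε t̄)^{1/3}` or `t_v > 2 t̄^{2/3}/ε^{1/3}`. -/
def IsHeavy {V : Type*} [Fintype V] [DecidableEq V]
    (G : SimpleGraph V) [DecidableRel G.Adj] (ε mbar tbar : ℝ) (v : V) : Prop :=
  2 * mbar / (ε * tbar) ^ ((1 : ℝ) / 3) < (G.degree v : ℝ) ∨
  2 * tbar ^ ((2 : ℝ) / 3) / ε ^ ((1 : ℝ) / 3)
    < (((G.cliqueFinset 3).filter (fun Δ => v ∈ Δ)).card : ℝ)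

/-- The weight of a triangle `Δ` with respect to a vertex set `L`:
`1/ℓ` where `ℓ > 0` is the number of vertices of `Δ` in `L`, and `0` if
`Δ` has no vertex in `L`. -/
noncomputable def triWeight {V : Type*} [DecidableEq V] (L : Finset V) (Δ : Finset V) : ℝ :=
  if (Δ ∩ L).card = 0 then 0 else 1 / ((Δ ∩ L).card : ℝ)

/-!
Each triangle meeting `L` spreads a total weight of one over its vertices in `L`, so the sum of the
weights is the number of triangles meeting `L`, and only the triangles inside `Lᶜ` are lost. With
`s = (ε t̄)^{1/3}`, a vertex of `Lᶜ` is not light, so it has degree above `2m̄/s` or lies on more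
than `t̄/(2s)` triangles. As the degrees sum to `2m ≤ 12m̄` and the triangle counts to `3t`, this
leaves at most `6s(1 + t/t̄)` vertices in `Lᶜ`, hence at most `(6s(1 + t/t̄))³/6 = O(εt)` lost
triangles.
-/

theorem card_filter_lt_mul_le_sum {ι R : Type*} [Semiring R] [LinearOrder R] [IsOrderedRing R]
    (s : Finset ι) {f : ι → R} (hf : ∀ i ∈ s, 0 ≤ f i) (c : R) :
    (#{i ∈ s | c < f i} : R) * c ≤ ∑ i ∈ s, f i :=
  calc (#{i ∈ s | c < f i} : R) * c
    _ = #{i ∈ s | c < f i} • c := (nsmul_eq_mul _ _).symm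
    _ ≤ ∑ i ∈ s with c < f i, f i := card_nsmul_le_sum _ _ _ fun _ hi => (mem_filter.1 hi).2.le
    _ ≤ ∑ i ∈ s, f i :=
      sum_le_sum_of_subset_of_nonneg (filter_subset _ _) fun i hi _ => hf i hi

section Weights

variable {V : Type*} [DecidableEq V]

theorem card_inter_mul_triWeight (L Δ : Finset V) :
    (#(Δ ∩ L) : ℝ) * triWeight L Δ = if Disjoint Δ L then 0 else 1 := by
  by_cases h : Disjoint Δ L
  · simp [triWeight, h, disjoint_iff_inter_eq_empty.1 h]
  · have hcard : #(Δ ∩ L) ≠ 0 := by rwa [Ne, card_eq_zero, ← disjoint_iff_inter_eq_empty]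
    simp [triWeight, h, hcard]

theorem sum_triWeight_eq_card_not_disjoint (T : Finset (Finset V)) (L : Finset V) :
    ∑ v ∈ L, ∑ Δ ∈ T with v ∈ Δ, triWeight L Δ = #{Δ ∈ T | ¬Disjoint Δ L} :=
  calc ∑ v ∈ L, ∑ Δ ∈ T with v ∈ Δ, triWeight L Δ
    _ = ∑ Δ ∈ T, ∑ _v ∈ Δ ∩ L, triWeight L Δ :=
      sum_comm' fun v Δ => by simp only [mem_filter, mem_inter]; tauto
    _ = ∑ Δ ∈ T, if ¬Disjoint Δ L then (1 : ℝ) else 0 := by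
      simp only [sum_const, nsmul_eq_mul, card_inter_mul_triWeight, ite_not]
    _ = #{Δ ∈ T | ¬Disjoint Δ L} := sum_boole _ _

end Weights

section Degrees

variable {V : Type*} [Fintype V] (G : SimpleGraph V) [DecidableRel G.Adj]

theorem card_filter_lt_degree_mul_le (d : ℝ) :
    (#{v | d < (G.degree v : ℝ)} : ℝ) * d ≤ 2 * #G.edgeFinset := by
  refine (card_filter_lt_mul_le_sum univ (fun _ _ => Nat.cast_nonneg _) d).trans_eq ?_
  exact_mod_cast G.sum_degrees_eq_twice_card_edges

theorem card_filter_two_mul_div_lt_degree_le {s c k : ℝ} (hs : 0 < s) (hc : 0 < c)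
    (hk : #G.edgeFinset ≤ k * c) : (#{v | 2 * c / s < (G.degree v : ℝ)} : ℝ) ≤ k * s := by
  refine le_of_mul_le_mul_right ?_ (by positivity : 0 < 2 * c / s)
  calc (#{v | 2 * c / s < (G.degree v : ℝ)} : ℝ) * (2 * c / s)
    _ ≤ 2 * #G.edgeFinset := card_filter_lt_degree_mul_le G _
    _ ≤ 2 * (k * c) := by gcongr
    _ = k * s * (2 * c / s) := by field_simp

end Degrees

section Cliques

variable {V : Type*} [Fintype V] [DecidableEq V] (G : SimpleGraph V) [DecidableRel G.Adj]

theorem sum_card_cliqueFinset_filter_mem (n : ℕ) :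
    ∑ v, #{K ∈ G.cliqueFinset n | v ∈ K} = n * #(G.cliqueFinset n) :=
  calc ∑ v, #{K ∈ G.cliqueFinset n | v ∈ K}
    _ = ∑ K ∈ G.cliqueFinset n, #{v | v ∈ K} :=
      sum_card_bipartiteAbove_eq_sum_card_bipartiteBelow (· ∈ ·)
    _ = ∑ _K ∈ G.cliqueFinset n, n :=
      sum_congr rfl fun K hK => by rw [filter_univ_mem, (mem_cliqueFinset_iff.1 hK).card_eq]
    _ = n * #(G.cliqueFinset n) := by rw [sum_const, smul_eq_mul, mul_comm]

theorem card_cliqueFinset_filter_disjoint_le (n : ℕ) (L : Finset V) :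
    #{K ∈ G.cliqueFinset n | Disjoint K L} ≤ (#Lᶜ).choose n := by
  rw [← card_powersetCard]
  refine card_le_card fun K hK => ?_
  obtain ⟨hclique, hdisj⟩ := mem_filter.1 hK
  exact mem_powersetCard.2
    ⟨subset_compl_iff_disjoint_right.2 hdisj, (mem_cliqueFinset_iff.1 hclique).card_eq⟩

theorem card_filter_lt_card_cliques_mul_le (n : ℕ) (c : ℝ) :
    (#{v | c < (#{K ∈ G.cliqueFinset n | v ∈ K} : ℝ)} : ℝ) * c ≤ n * #(G.cliqueFinset n) := by
  refine (card_filter_lt_mul_le_sum univ (fun _ _ => Nat.cast_nonneg _) c).trans_eq ?_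
  exact_mod_cast sum_card_cliqueFinset_filter_mem G n

theorem card_filter_div_lt_card_cliques_mul_le (n : ℕ) (c : ℝ) {r : ℝ} (hr : 0 < r) :
    (#{v | c / r < (#{K ∈ G.cliqueFinset n | v ∈ K} : ℝ)} : ℝ) * c
      ≤ n * #(G.cliqueFinset n) * r := by
  rw [← div_le_iff₀ hr, mul_div_assoc]
  exact card_filter_lt_card_cliques_mul_le G n (c / r)

end Cliques

theorem rpow_two_thirds_div_rpow_third {ε τ : ℝ} (hε : 0 ≤ ε) (hτ : 0 < τ) :
    τ ^ ((2 : ℝ) / 3) / (2 * ε ^ ((1 : ℝ) / 3)) = τ / (2 * (ε * τ) ^ ((1 : ℝ) / 3)) := by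
  have hsplit : τ ^ ((2 : ℝ) / 3) * τ ^ ((1 : ℝ) / 3) = τ := by
    rw [← Real.rpow_add hτ]
    norm_num
  rw [Real.mul_rpow hε hτ.le, ← mul_assoc,
    ← mul_div_mul_right _ _ (Real.rpow_pos_of_pos hτ (1 / 3)).ne', hsplit]

-- The constant `125 / 4` is the value of `(τ + t)³ / (tτ²)` at `t = 4τ`, where it is largest.
theorem four_mul_add_pow_three_le {t τ : ℝ} (hτt : τ ≤ t) (htτ : t ≤ 4 * τ) :
    4 * (τ + t) ^ 3 ≤ 125 * t * τ ^ 2 := by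
  have hτ : 0 ≤ τ := by linarith
  have hquadratic : τ ^ 2 ≤ 4 * t ^ 2 + 28 * (t * τ) := by nlinarith [hτ]
  have hfactor : 125 * t * τ ^ 2 - 4 * (τ + t) ^ 3 =
      (4 * τ - t) * (4 * t ^ 2 + 28 * (t * τ) - τ ^ 2) := by ring
  rw [← sub_nonneg, hfactor]
  exact mul_nonneg (sub_nonneg.2 htτ) (sub_nonneg.2 hquadratic)

section LightVertices

variable {V : Type*} [Fintype V] [DecidableEq V] (G : SimpleGraph V) [DecidableRel G.Adj]
  {ε mbar tbar : ℝ}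

theorem not_isLight_iff (hε : 0 ≤ ε) (htbar : 0 < tbar) {v : V} :
    ¬IsLight G ε mbar tbar v ↔
      2 * mbar / (ε * tbar) ^ ((1 : ℝ) / 3) < (G.degree v : ℝ) ∨
      tbar / (2 * (ε * tbar) ^ ((1 : ℝ) / 3)) < (#{Δ ∈ G.cliqueFinset 3 | v ∈ Δ} : ℝ) := by
  rw [IsLight, rpow_two_thirds_div_rpow_third hε htbar, not_and_or, not_le, not_le]

theorem card_mul_le_of_forall_not_isLight (hε : 0 < ε) (hmbar : 0 < mbar) (htbar : 0 < tbar)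
    (hm : (#G.edgeFinset : ℝ) / 6 ≤ mbar) {S : Finset V}
    (hS : ∀ v ∈ S, ¬IsLight G ε mbar tbar v) :
    (#S : ℝ) * tbar ≤ 6 * (ε * tbar) ^ ((1 : ℝ) / 3) * (tbar + #(G.cliqueFinset 3)) := by
  simp only [not_isLight_iff G hε.le htbar] at hS
  set s : ℝ := (ε * tbar) ^ ((1 : ℝ) / 3)
  have hs : 0 < s := Real.rpow_pos_of_pos (mul_pos hε htbar) _
  set A : Finset V := {v | 2 * mbar / s < (G.degree v : ℝ)}
  set B : Finset V := {v | tbar / (2 * s) < (#{Δ ∈ G.cliqueFinset 3 | v ∈ Δ} : ℝ)}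
  have hcover : S ⊆ A ∪ B := fun v hv => by
    simpa only [A, B, mem_union, mem_filter_univ] using hS v hv
  have hA : (#A : ℝ) ≤ 6 * s := card_filter_two_mul_div_lt_degree_le G hs hmbar (by linarith)
  have hB : (#B : ℝ) * tbar ≤ (3 : ℕ) * #(G.cliqueFinset 3) * (2 * s) :=
    card_filter_div_lt_card_cliques_mul_le G 3 tbar (by positivity)
  have hcard : (#S : ℝ) ≤ #A + #B := by
    exact_mod_cast (card_le_card hcover).trans (card_union_le A B)
  calc (#S : ℝ) * tbar
    _ ≤ #A * tbar + #B * tbar := by rw [← add_mul]; gcongr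
    _ ≤ 6 * s * tbar + (3 : ℕ) * #(G.cliqueFinset 3) * (2 * s) := by gcongr
    _ = 6 * s * (tbar + #(G.cliqueFinset 3)) := by push_cast; ring

theorem card_pow_three_le_of_forall_not_isLight (hε : 0 < ε) (hmbar : 0 < mbar) (htbar : 0 < tbar)
    (hm : (#G.edgeFinset : ℝ) / 6 ≤ mbar) (ht4 : (#(G.cliqueFinset 3) : ℝ) / 4 ≤ tbar)
    (htt : tbar ≤ #(G.cliqueFinset 3)) {S : Finset V}
    (hS : ∀ v ∈ S, ¬IsLight G ε mbar tbar v) :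
    (#S : ℝ) ^ 3 ≤ 6750 * ε * #(G.cliqueFinset 3) := by
  have hlinear := card_mul_le_of_forall_not_isLight G hε hmbar htbar hm hS
  set t : ℝ := (#(G.cliqueFinset 3) : ℝ)
  set s : ℝ := (ε * tbar) ^ ((1 : ℝ) / 3) with hs
  have hcube : s ^ 3 = ε * tbar := by
    rw [hs, ← Real.rpow_mul_natCast (by positivity)]
    norm_num
  have hratio := four_mul_add_pow_three_le htt (by linarith)
  refine le_of_mul_le_mul_right ?_ (by positivity : 0 < tbar ^ 3)
  calc (#S : ℝ) ^ 3 * tbar ^ 3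
    _ = (#S * tbar) ^ 3 := (mul_pow _ _ _).symm
    _ ≤ (6 * s * (tbar + t)) ^ 3 := by gcongr
    _ = 54 * (ε * tbar) * (4 * (tbar + t) ^ 3) := by rw [← hcube]; ring
    _ ≤ 54 * (ε * tbar) * (125 * t * tbar ^ 2) := by gcongr
    _ = 6750 * ε * t * tbar ^ 3 := by ring

theorem card_triangles_disjoint_le (hε : 0 < ε) (hmbar : 0 < mbar) (htbar : 0 < tbar)
    (hm : (#G.edgeFinset : ℝ) / 6 ≤ mbar) (ht4 : (#(G.cliqueFinset 3) : ℝ) / 4 ≤ tbar)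
    (htt : tbar ≤ #(G.cliqueFinset 3)) {L : Finset V} (hL : ∀ v, IsLight G ε mbar tbar v → v ∈ L) :
    (#{Δ ∈ G.cliqueFinset 3 | Disjoint Δ L} : ℝ) ≤ 1125 * ε * #(G.cliqueFinset 3) := by
  have hcompl : (#Lᶜ : ℝ) ^ 3 ≤ 6750 * ε * #(G.cliqueFinset 3) :=
    card_pow_three_le_of_forall_not_isLight G hε hmbar htbar hm ht4 htt
      fun v hv hlight => mem_compl.1 hv (hL v hlight)
  calc (#{Δ ∈ G.cliqueFinset 3 | Disjoint Δ L} : ℝ)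
    _ ≤ (#Lᶜ).choose 3 := mod_cast card_cliqueFinset_filter_disjoint_le G 3 L
    _ ≤ (#Lᶜ : ℝ) ^ 3 / Nat.factorial 3 := Nat.choose_le_pow_div 3 _
    _ = (#Lᶜ : ℝ) ^ 3 / 6 := by norm_num [Nat.factorial]
    _ ≤ 1125 * ε * #(G.cliqueFinset 3) := by linarith

end LightVertices

theorem sum_weights_appropriate_partition_bounds_general
    {V : Type*} [Fintype V] [DecidableEq V]
    (G : SimpleGraph V) [DecidableRel G.Adj]
    (ε mbar tbar : ℝ) (hε0 : 0 < ε) (hmbar0 : 0 < mbar) (htbar0 : 0 < tbar)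
    (hm : (#G.edgeFinset : ℝ) / 6 ≤ mbar)
    (ht4 : (#(G.cliqueFinset 3) : ℝ) / 4 ≤ tbar)
    (htt : tbar ≤ #(G.cliqueFinset 3))
    (L : Finset V) (hL : ∀ v, IsLight G ε mbar tbar v → v ∈ L) :
    (1 - 2000 * ε) * #(G.cliqueFinset 3)
        ≤ ∑ v ∈ L, ∑ Δ ∈ G.cliqueFinset 3 with v ∈ Δ, triWeight L Δ
      ∧ ∑ v ∈ L, ∑ Δ ∈ G.cliqueFinset 3 with v ∈ Δ, triWeight L Δ ≤ #(G.cliqueFinset 3) := by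
  rw [sum_triWeight_eq_card_not_disjoint]
  refine ⟨?_, mod_cast card_filter_le _ _⟩
  have hlost := card_triangles_disjoint_le G hε0 hmbar0 htbar0 hm ht4 htt hL
  have hsplit : (#{Δ ∈ G.cliqueFinset 3 | Disjoint Δ L} : ℝ)
      + #{Δ ∈ G.cliqueFinset 3 | ¬Disjoint Δ L} = #(G.cliqueFinset 3) :=
    mod_cast card_filter_add_card_filter_not _
  have hεt : 0 ≤ ε * #(G.cliqueFinset 3) := by positivity
  linarith [hlost, hsplit, hεt]

/-- For an appropriate partition `(H, L)` (every heavy vertex is in `H`, every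
light vertex is in `L`), if `m̄ ≥ m/6` and `t/4 ≤ t̄ ≤ t`, then
`(1 − 2000ε)·t ≤ Σ_{v ∈ L} wt(v) ≤ t`. -/
theorem sum_weights_appropriate_partition_bounds
    {V : Type*} [Fintype V] [DecidableEq V]
    (G : SimpleGraph V) [DecidableRel G.Adj]
    (ε mbar tbar : ℝ) (hε0 : 0 < ε) (hε1 : ε < 1)
    (hmbar0 : 0 < mbar) (htbar0 : 0 < tbar)
    (ht1 : 1 ≤ (G.cliqueFinset 3).card)
    (hm : (G.edgeFinset.card : ℝ) / 6 ≤ mbar)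
    (ht4 : ((G.cliqueFinset 3).card : ℝ) / 4 ≤ tbar)
    (htt : tbar ≤ ((G.cliqueFinset 3).card : ℝ))
    (H L : Finset V) (hHL : H ∪ L = Finset.univ) (hdisj : Disjoint H L)
    (hH : ∀ v, IsHeavy G ε mbar tbar v → v ∈ H)
    (hL : ∀ v, IsLight G ε mbar tbar v → v ∈ L) :
    (1 - 2000 * ε) * ((G.cliqueFinset 3).card : ℝ)
        ≤ (∑ v ∈ L, ∑ Δ ∈ (G.cliqueFinset 3).filter (fun Δ => v ∈ Δ), triWeight L Δ)
      ∧ (∑ v ∈ L, ∑ Δ ∈ (G.cliqueFinset 3).filter (fun Δ => v ∈ Δ), triWeight L Δ)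
        ≤ ((G.cliqueFinset 3).card : ℝ) := by
  exact sum_weights_appropriate_partition_bounds_general G ε mbar tbar hε0 hmbar0 htbar0
    hm ht4 htt L hL
end

section
/- Let G be a finite simple graph, ≺ the degree-then-label order on its vertices, and v a vertex of degree d_v ≥ 1. Consider the random experiment: choose x uniformly at random from Γ(v); let u be the ≺-smaller of v and x; choose w uniformly at random from Γ(u); let Z = deg(u) if w is adjacent to both v and x and x ≺ w, and Z = 0 otherwise. Then the expected value of Z equals t_v / d_v, where t_v is the number of triangles of G containing v. -/
/-!
Since `u` is one of `v`, `x`, every common neighbor of `v` and `x` lies in `Γ(u)`. The value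
`deg u` of `Z` cancels the probability `1 / deg u` of each `w`, so, given `x`, the expectation of
`Z` is the number of common neighbors `w` of `v` and `x` with `x ≺ w`. Summed over `x`, this counts
each triangle through `v` once, because `≺` orders its other two vertices in exactly one way.
-/

open Finset SimpleGraph

/-- The `≺`-smaller of the two vertices `v` and `x`. -/
def smallerEndpoint {V : Type*} [Fintype V] [LinearOrder V] (G : SimpleGraph V)
    [DecidableRel G.Adj] (v x : V) : V :=
  if prec G v x then v else x

section Prec

variable {V : Type*} [Fintype V] [LinearOrder V] (G : SimpleGraph V) [DecidableRel G.Adj]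

theorem prec_eq_invImage_lex :
    prec G = InvImage (LT.lt : ℕ ×ₗ V → ℕ ×ₗ V → Prop) fun u ↦ toLex (G.degree u, u) := by
  ext u w
  simp only [InvImage, Prod.Lex.toLex_lt_toLex]

instance prec_asymm : Std.Asymm (prec G) := by
  rw [prec_eq_invImage_lex]
  infer_instance

instance prec_trichotomous : Std.Trichotomous (prec G) := by
  rw [prec_eq_invImage_lex]
  exact InvImage.trichotomous fun u w h ↦ congrArg (fun p ↦ (ofLex p).2) h

theorem smallerEndpoint_eq_or_eq (v x : V) :
    smallerEndpoint G v x = v ∨ smallerEndpoint G v x = x :=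
  ite_eq_or_eq _ _ _

end Prec

theorem one_div_card_mul_sum_ite_card {α K : Type*} [DivisionSemiring K] [CharZero K]
    (s : Finset α) (p : α → Prop) [DecidablePred p] :
    (1 / (#s : K)) * ∑ a ∈ s, (if p a then (#s : K) else 0) = #{a ∈ s | p a} := by
  obtain rfl | hs := s.eq_empty_or_nonempty
  · simp
  · have hcard : (#s : K) ≠ 0 := Nat.cast_ne_zero.mpr hs.card_ne_zero
    rw [← sum_filter, sum_const, nsmul_eq_mul, (Nat.cast_commute _ _).eq, ← mul_assoc,
      one_div_mul_cancel hcard, one_mul]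

theorem pair_inj_of_asymm {α : Type*} [DecidableEq α] (r : α → α → Prop) [Std.Asymm r]
    {a b c d : α} (hab : r a b) (hcd : r c d) (h : ({a, b} : Finset α) = {c, d}) :
    a = c ∧ b = d := by
  rw [← coe_inj, coe_pair, coe_pair, Set.pair_eq_pair_iff] at h
  obtain h | ⟨rfl, rfl⟩ := h
  · exact h
  · exact absurd hcd (Std.Asymm.asymm a b hab)

/-- The triangles of `G` that contain `v`, each encoded as its set of vertices. -/
def trianglesThrough {V : Type*} (G : SimpleGraph V) (v : V) : Set (Finset V) :=
  {Δ | G.IsNClique 3 Δ ∧ v ∈ Δ}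

theorem coe_filter_mem_cliqueFinset_three {V : Type*} [Fintype V] [DecidableEq V]
    (G : SimpleGraph V) [DecidableRel G.Adj] (v : V) :
    (((G.cliqueFinset 3).filter fun Δ ↦ v ∈ Δ : Finset (Finset V)) : Set (Finset V)) =
      trianglesThrough G v := by
  ext Δ
  simp [trianglesThrough, mem_cliqueFinset_iff]

theorem mem_trianglesThrough_iff {V : Type*} [DecidableEq V] {G : SimpleGraph V} {v : V}
    {Δ : Finset V} :
    Δ ∈ trianglesThrough G v ↔
      ∃ x w, G.Adj v x ∧ G.Adj v w ∧ G.Adj x w ∧ Δ = {v, x, w} := by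
  constructor
  · rintro ⟨hΔ, hv⟩
    obtain ⟨a, b, c, hab, hac, hbc, rfl⟩ := is3Clique_iff.mp hΔ
    simp only [mem_insert, mem_singleton] at hv
    obtain rfl | rfl | rfl := hv
    · exact ⟨b, c, hab, hac, hbc, rfl⟩
    · exact ⟨a, c, hab.symm, hbc, hac, insert_comm _ _ _⟩
    · exact ⟨a, b, hac.symm, hbc.symm, hab, by rw [pair_comm b v, insert_comm]⟩
  · rintro ⟨x, w, hvx, hvw, hxw, rfl⟩
    exact ⟨is3Clique_triple_iff.mpr ⟨hvx, hvw, hxw⟩, mem_insert_self _ _⟩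

section OrientedLink

variable {V : Type*} (G : SimpleGraph V) [DecidableRel G.Adj] (r : V → V → Prop) [DecidableRel r]
  (v : V) [Fintype (G.neighborSet v)]

/-- The edges of `G` between neighbors of `v` (the link of `v`), each encoded as the pair
`⟨x, w⟩` of its endpoints with `r x w`. The pairs are dependent so that the cardinality is a sum
over `x`. -/
def orientedLink : Finset (Σ _ : V, V) :=
  (G.neighborFinset v).sigma fun x ↦ {w ∈ G.neighborFinset v | G.Adj x w ∧ r x w}

variable {G r v} in
theorem mem_orientedLink {p : Σ _ : V, V} :
    p ∈ orientedLink G r v ↔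
      G.Adj v p.1 ∧ G.Adj v p.2 ∧ G.Adj p.1 p.2 ∧ r p.1 p.2 := by
  simp only [orientedLink, mem_sigma, mem_filter, mem_neighborFinset]

theorem injOn_triangle_orientedLink [DecidableEq V] [Std.Asymm r] :
    Set.InjOn (fun p : Σ _ : V, V ↦ ({v, p.1, p.2} : Finset V)) (orientedLink G r v) := by
  rintro ⟨x, w⟩ hp ⟨y, z⟩ hq (htri : ({v, x, w} : Finset V) = {v, y, z})
  obtain ⟨hvx, hvw, -, hxw⟩ := mem_orientedLink.mp hp
  obtain ⟨hvy, hvz, -, hyz⟩ := mem_orientedLink.mp hq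
  have hpair : ({x, w} : Finset V) = {y, z} := by
    rw [← erase_insert (a := v) (s := {x, w}) (by simp [hvx.ne, hvw.ne]), htri,
      erase_insert (by simp [hvy.ne, hvz.ne])]
  obtain ⟨rfl, rfl⟩ := pair_inj_of_asymm r hxw hyz hpair
  rfl

theorem image_triangle_orientedLink [DecidableEq V] [Std.Trichotomous r] :
    (fun p : Σ _ : V, V ↦ ({v, p.1, p.2} : Finset V)) '' (orientedLink G r v) =
      trianglesThrough G v := by
  ext Δ
  rw [mem_trianglesThrough_iff]
  constructor
  · rintro ⟨⟨x, w⟩, hp, rfl⟩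
    obtain ⟨hvx, hvw, hxw, -⟩ := mem_orientedLink.mp hp
    exact ⟨x, w, hvx, hvw, hxw, rfl⟩
  · rintro ⟨x, w, hvx, hvw, hxw, rfl⟩
    obtain hr | hr : r x w ∨ r w x := by
      by_contra! h
      exact hxw.ne (Std.Trichotomous.trichotomous x w h.1 h.2)
    · exact ⟨⟨x, w⟩, mem_orientedLink.mpr ⟨hvx, hvw, hxw, hr⟩, rfl⟩
    · exact ⟨⟨w, x⟩, mem_orientedLink.mpr ⟨hvw, hvx, hxw.symm, hr⟩,
        congrArg (insert v) (pair_comm w x)⟩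

theorem ncard_trianglesThrough [Std.Asymm r] [Std.Trichotomous r] :
    (trianglesThrough G v).ncard =
      ∑ x ∈ G.neighborFinset v, #{w ∈ G.neighborFinset v | G.Adj x w ∧ r x w} := by
  classical
  rw [← image_triangle_orientedLink G r v,
    (injOn_triangle_orientedLink G r v).ncard_image, Set.ncard_coe_finset,
    orientedLink, card_sigma]

end OrientedLink

section Expectation

variable {V K : Type*} [DivisionSemiring K] [CharZero K] (G : SimpleGraph V) [G.LocallyFinite]
  [DecidableRel G.Adj] (r : V → V → Prop) [DecidableRel r]

theorem one_div_degree_mul_sum_neighborFinset {v x u : V} (hu : u = v ∨ u = x) :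
    (1 / (G.degree u : K)) * ∑ w ∈ G.neighborFinset u,
        (if G.Adj v w ∧ G.Adj x w ∧ r x w then (G.degree u : K) else 0) =
      #{w ∈ G.neighborFinset v | G.Adj x w ∧ r x w} := by
  have hfilter : {w ∈ G.neighborFinset u | G.Adj v w ∧ G.Adj x w ∧ r x w} =
      {w ∈ G.neighborFinset v | G.Adj x w ∧ r x w} := by
    ext w
    simp only [mem_filter, mem_neighborFinset]
    obtain rfl | rfl := hu <;> tauto
  simp only [← card_neighborFinset_eq_degree]
  rw [one_div_card_mul_sum_ite_card, hfilter]

theorem expectation_Z_eq_tv_div_dv_general [Std.Asymm r] [Std.Trichotomous r]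
    (v : V) (_hd : 1 ≤ G.degree v) (u : V → V) (hu : ∀ x, G.Adj v x → u x = v ∨ u x = x) :
    (1 / (G.degree v : K)) *
        ∑ x ∈ G.neighborFinset v,
          (1 / (G.degree (u x) : K)) *
            ∑ w ∈ G.neighborFinset (u x),
              (if G.Adj v w ∧ G.Adj x w ∧ r x w then (G.degree (u x) : K) else 0) =
      ((trianglesThrough G v).ncard : K) / (G.degree v : K) := by
  rw [sum_congr rfl fun x hx ↦ one_div_degree_mul_sum_neighborFinset G r
      (hu x ((G.mem_neighborFinset v x).mp hx)),
    ← Nat.cast_sum, ← ncard_trianglesThrough G r v, one_div, div_eq_mul_inv,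
    (Nat.cast_commute _ _).inv_left₀.eq]

end Expectation

/-- Choose `x` uniformly in `Γ(v)`, let `u` be the `≺`-smaller of `v` and `x`,
choose `w` uniformly in `Γ(u)`, and let `Z = deg u` if `w` is adjacent to both
`v` and `x` and `x ≺ w`, and `Z = 0` otherwise. Then `E[Z] = t_v / d_v`. -/
theorem expectation_Z_eq_tv_div_dv
    {V : Type*} [Fintype V] [LinearOrder V]
    (G : SimpleGraph V) [DecidableRel G.Adj] (v : V) (hd : 1 ≤ G.degree v) :
    (1 / (G.degree v : ℝ)) *
        ∑ x ∈ G.neighborFinset v,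
          (1 / (G.degree (smallerEndpoint G v x) : ℝ)) *
            ∑ w ∈ G.neighborFinset (smallerEndpoint G v x),
              (if G.Adj v w ∧ G.Adj x w ∧ prec G x w
                then (G.degree (smallerEndpoint G v x) : ℝ) else 0)
      = (((G.cliqueFinset 3).filter (fun Δ => v ∈ Δ)).card : ℝ)
          / (G.degree v : ℝ) := by
  rw [← Set.ncard_coe_finset, coe_filter_mem_cliqueFinset_three]
  exact expectation_Z_eq_tv_div_dv_general G (prec G) v hd (smallerEndpoint G v)
    fun x _ ↦ smallerEndpoint_eq_or_eq G v x
end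

section
/- Let n ≥ 4 be an even natural number and let G be the simple graph on the vertex set Fin n ⊕ Fin n (left side L and right side R) with the following edges: a cross edge between inl i and inr j if and only if i ≠ j; a left edge between inl i and inl j if and only if {i, j} = {2a, 2a+1} for some a; and a right edge between inr i and inr j if and only if {i, j} = {2a, 2a+1} for some a. Then every vertex of G has degree exactly n, and the number of triangles of G is exactly n·(n − 2). -/
open Finset SimpleGraph

open scoped Classical

/-- The underlying relation: a cross edge between `inl i` and `inr j` iff
`i ≠ j`; a matching edge within each side pairing index `2a` with `2a+1`. -/
def matchingBipartiteRel (n : ℕ) : (Fin n ⊕ Fin n) → (Fin n ⊕ Fin n) → Prop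
  | Sum.inl i, Sum.inr j => i ≠ j
  | Sum.inl i, Sum.inl j => ∃ a : ℕ, i.val = 2 * a ∧ j.val = 2 * a + 1
  | Sum.inr i, Sum.inr j => ∃ a : ℕ, i.val = 2 * a ∧ j.val = 2 * a + 1
  | Sum.inr _, Sum.inl _ => False

/-- The graph obtained from `K_{n,n}` by removing the perfect matching
`{(inl i, inr i)}` and adding a perfect matching within each side pairing
index `2a` with `2a+1`. -/
def matchingBipartiteGraph (n : ℕ) : SimpleGraph (Fin n ⊕ Fin n) :=
  SimpleGraph.fromRel (matchingBipartiteRel n)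

/-!
The graph is a disjoint union of two graphs `G` and `H` on one vertex type `α`, joined by all cross
edges except a perfect matching. A clique of such a graph is a pair of disjoint cliques, one of `G`
and one of `H`, so an edge of `G` or `H` forms a triangle with exactly `card α - 2` vertices of the
other side. If `G` and `H` are perfect matchings, they have no triangles of their own and have
`card α` edges altogether, whence `card α * (card α - 2)` triangles.
-/

section Cliques

variable {α : Type*}

theorem cliqueFree_of_degree_le {G : SimpleGraph α} [LocallyFinite G] {d : ℕ}
    (hdeg : ∀ v, G.degree v ≤ d) : G.CliqueFree (d + 2) := by
  intro s hs
  obtain ⟨a, ha⟩ : s.Nonempty := card_pos.1 (by rw [hs.card_eq]; lia)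
  have hsub : s.erase a ⊆ G.neighborFinset a := fun b hb ↦
    (G.mem_neighborFinset a b).2 <|
      hs.isClique ha (mem_of_mem_erase hb) (ne_of_mem_erase hb).symm
  have hle := (card_le_card hsub).trans (hdeg a)
  rw [card_erase_of_mem ha, hs.card_eq] at hle
  lia

variable [Fintype α] [DecidableEq α]

theorem cliqueFinset_eq_powersetCard_of_le_one (G : SimpleGraph α) {m : ℕ} (hm : m ≤ 1) :
    G.cliqueFinset m = powersetCard m univ := by
  ext s
  simp only [mem_cliqueFinset_iff, isNClique_iff, mem_powersetCard_univ, and_iff_right_iff_imp]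
  intro hs
  exact .of_subsingleton (card_le_one_iff_subsingleton.1 (hs.trans_le hm))

theorem cliqueFinset_two_eq_image_edgeFinset (G : SimpleGraph α) :
    G.cliqueFinset 2 = G.edgeFinset.image Sym2.toFinset := by
  ext s
  simp only [mem_cliqueFinset_iff, isNClique_iff, card_eq_two, mem_image, Sym2.exists,
    mem_edgeFinset, mem_edgeSet, Sym2.toFinset_mk_eq]
  constructor
  · rintro ⟨hs, a, b, hab, rfl⟩
    exact ⟨a, b, isClique_pair.1 (by simpa using hs) hab, rfl⟩
  · rintro ⟨a, b, hab, rfl⟩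
    exact ⟨by simpa using isClique_pair.2 fun _ ↦ hab, a, b, hab.ne, rfl⟩

theorem sum_degree_eq_two_mul_card_cliqueFinset_two (G : SimpleGraph α) :
    ∑ v, G.degree v = 2 * #(G.cliqueFinset 2) := by
  have toFinset_injective : (Sym2.toFinset (α := α)).Injective := fun e e' h ↦
    Sym2.ext fun a ↦ by rw [← Sym2.mem_toFinset, h, Sym2.mem_toFinset]
  rw [cliqueFinset_two_eq_image_edgeFinset, card_image_of_injective _ toFinset_injective,
    sum_degrees_eq_twice_card_edges]

end Cliques

section DisjointPairs

variable {α : Type*} [DecidableEq α]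

/-- The pairs consisting of a member of `𝒜` and a member of `ℬ` that are disjoint. Cliques of
`crownSum G H` correspond to such pairs, with `𝒜` and `ℬ` families of cliques of `G` and `H`. -/
def disjointPairs (𝒜 ℬ : Finset (Finset α)) : Finset (Finset α × Finset α) :=
  {p ∈ 𝒜 ×ˢ ℬ | Disjoint p.1 p.2}

theorem mem_disjointPairs {𝒜 ℬ : Finset (Finset α)} {p : Finset α × Finset α} :
    p ∈ disjointPairs 𝒜 ℬ ↔ (p.1 ∈ 𝒜 ∧ p.2 ∈ ℬ) ∧ Disjoint p.1 p.2 := by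
  rw [disjointPairs, mem_filter, mem_product]

theorem card_disjointPairs_comm (𝒜 ℬ : Finset (Finset α)) :
    #(disjointPairs 𝒜 ℬ) = #(disjointPairs ℬ 𝒜) :=
  card_equiv (Equiv.prodComm _ _) fun p ↦ by
    simp only [mem_disjointPairs, Equiv.prodComm_apply, Prod.fst_swap, Prod.snd_swap,
      disjoint_comm, and_comm (a := p.1 ∈ 𝒜)]

theorem card_disjointPairs_powersetCard [Fintype α] {𝒜 : Finset (Finset α)} {k : ℕ}
    (h𝒜 : ∀ s ∈ 𝒜, #s = k) (m : ℕ) :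
    #(disjointPairs 𝒜 (powersetCard m univ)) = #𝒜 * (Fintype.card α - k).choose m := by
  have hfiber : ∀ s ∈ 𝒜, #{t ∈ powersetCard m univ | Disjoint s t}
      = (Fintype.card α - k).choose m := by
    intro s hs
    have hcompl : ({t ∈ powersetCard m univ | Disjoint s t} : Finset (Finset α)) =
        powersetCard m sᶜ := by
      ext t
      simp only [mem_filter, mem_powersetCard, subset_univ, true_and,
        subset_compl_iff_disjoint_left, and_comm]
    rw [hcompl, card_powersetCard, card_compl, h𝒜 s hs]
  simp_rw [card_filter] at hfiber
  rw [disjointPairs, card_filter, sum_product, sum_congr rfl hfiber, sum_const, smul_eq_mul]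

end DisjointPairs

/-- The disjoint union of `G` and `H`, joined by the crown graph in which `inl i` and `inr j` are
adjacent iff `i ≠ j`. -/
def crownSum {α : Type*} (G H : SimpleGraph α) : SimpleGraph (α ⊕ α) where
  Adj
    | .inl i, .inl j => G.Adj i j
    | .inr i, .inr j => H.Adj i j
    | .inl i, .inr j | .inr i, .inl j => i ≠ j
  symm := ⟨by rintro (i | i) (j | j) h <;> exact h.symm⟩
  loopless := ⟨by rintro (i | i) h <;> exact h.ne rfl⟩

namespace crownSum

variable {α : Type*} {G H : SimpleGraph α}

@[simp] theorem adj_inl_inl {i j : α} : (crownSum G H).Adj (.inl i) (.inl j) ↔ G.Adj i j := .rfl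

@[simp] theorem adj_inr_inr {i j : α} : (crownSum G H).Adj (.inr i) (.inr j) ↔ H.Adj i j := .rfl

@[simp] theorem adj_inl_inr {i j : α} : (crownSum G H).Adj (.inl i) (.inr j) ↔ i ≠ j := .rfl

@[simp] theorem adj_inr_inl {i j : α} : (crownSum G H).Adj (.inr i) (.inl j) ↔ i ≠ j := .rfl

theorem isClique_iff {s : Finset (α ⊕ α)} :
    (crownSum G H).IsClique s ↔
      G.IsClique s.toLeft ∧ H.IsClique s.toRight ∧ Disjoint s.toLeft s.toRight := by
  simp only [SimpleGraph.isClique_iff, Set.Pairwise, Sum.forall, mem_coe, mem_toLeft, mem_toRight,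
    Finset.disjoint_left, adj_inl_inl, adj_inr_inr, adj_inl_inr, adj_inr_inl]
  grind

variable [Fintype α]

theorem neighborFinset_inl (i : α) :
    (crownSum G H).neighborFinset (.inl i) = (G.neighborFinset i).disjSum {i}ᶜ := by
  ext (j | j) <;> simp [eq_comm]

theorem neighborFinset_inr (i : α) :
    (crownSum G H).neighborFinset (.inr i) = disjSum {i}ᶜ (H.neighborFinset i) := by
  ext (j | j) <;> simp [eq_comm]

theorem degree_inl (i : α) :
    (crownSum G H).degree (.inl i) = G.degree i + (Fintype.card α - 1) := by
  rw [← card_neighborFinset_eq_degree, neighborFinset_inl, card_disjSum, card_compl,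
    card_singleton, card_neighborFinset_eq_degree]

theorem degree_inr (i : α) :
    (crownSum G H).degree (.inr i) = H.degree i + (Fintype.card α - 1) := by
  rw [← card_neighborFinset_eq_degree, neighborFinset_inr, card_disjSum, card_compl,
    card_singleton, card_neighborFinset_eq_degree, add_comm]

theorem isRegularOfDegree {d : ℕ} (hG : G.IsRegularOfDegree d) (hH : H.IsRegularOfDegree d) :
    (crownSum G H).IsRegularOfDegree (d + (Fintype.card α - 1)) := by
  rintro (i | i)
  · rw [degree_inl, hG.degree_eq]
  · rw [degree_inr, hH.degree_eq]

variable [DecidableEq α]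

theorem card_cliqueFinset (r : ℕ) :
    #((crownSum G H).cliqueFinset r) =
      ∑ p ∈ antidiagonal r, #(disjointPairs (G.cliqueFinset p.1) (H.cliqueFinset p.2)) := by
  have hmaps : ∀ s ∈ (crownSum G H).cliqueFinset r, (#s.toLeft, #s.toRight) ∈ antidiagonal r := by
    intro s hs
    rw [HasAntidiagonal.mem_antidiagonal, card_toLeft_add_card_toRight,
      (mem_cliqueFinset_iff.1 hs).card_eq]
  rw [card_eq_sum_card_fiberwise hmaps]
  refine sum_congr rfl fun p hp ↦ card_equiv Finset.sumEquiv.toEquiv fun s ↦ ?_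
  have hr := HasAntidiagonal.mem_antidiagonal.1 hp
  have hs := card_toLeft_add_card_toRight (u := s)
  simp only [mem_filter, mem_cliqueFinset_iff, isNClique_iff, isClique_iff, mem_disjointPairs,
    RelIso.coe_fn_toEquiv, sumEquiv_apply_fst, sumEquiv_apply_snd, Prod.ext_iff]
  grind

theorem card_cliqueFinset_three :
    #((crownSum G H).cliqueFinset 3) =
      #(G.cliqueFinset 3) + #(H.cliqueFinset 3) +
        (#(G.cliqueFinset 2) + #(H.cliqueFinset 2)) * (Fintype.card α - 2) := by
  have hcard (K : SimpleGraph α) (k : ℕ) : ∀ s ∈ K.cliqueFinset k, #s = k :=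
    fun s hs ↦ (mem_cliqueFinset_iff.1 hs).card_eq
  have hleft (k : ℕ) {m : ℕ} (hm : m ≤ 1) :
      #(disjointPairs (G.cliqueFinset k) (H.cliqueFinset m)) =
        #(G.cliqueFinset k) * (Fintype.card α - k).choose m := by
    rw [cliqueFinset_eq_powersetCard_of_le_one H hm, card_disjointPairs_powersetCard (hcard G k)]
  have hright (k : ℕ) {m : ℕ} (hm : m ≤ 1) :
      #(disjointPairs (G.cliqueFinset m) (H.cliqueFinset k)) =
        #(H.cliqueFinset k) * (Fintype.card α - k).choose m := by
    rw [cliqueFinset_eq_powersetCard_of_le_one G hm, card_disjointPairs_comm,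
      card_disjointPairs_powersetCard (hcard H k)]
  calc #((crownSum G H).cliqueFinset 3)
      = #(disjointPairs (G.cliqueFinset 0) (H.cliqueFinset 3)) +
          #(disjointPairs (G.cliqueFinset 1) (H.cliqueFinset 2)) +
          #(disjointPairs (G.cliqueFinset 2) (H.cliqueFinset 1)) +
          #(disjointPairs (G.cliqueFinset 3) (H.cliqueFinset 0)) := by
        rw [card_cliqueFinset]
        simp [Nat.antidiagonal_succ, add_assoc]
    _ = #(H.cliqueFinset 3) * (Fintype.card α - 3).choose 0 +
          #(H.cliqueFinset 2) * (Fintype.card α - 2).choose 1 +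
          #(G.cliqueFinset 2) * (Fintype.card α - 2).choose 1 +
          #(G.cliqueFinset 3) * (Fintype.card α - 3).choose 0 := by
        rw [hright 3 zero_le_one, hright 2 le_rfl, hleft 2 le_rfl, hleft 3 zero_le_one]
    _ = _ := by
        rw [Nat.choose_zero_right, Nat.choose_one_right]
        ring

end crownSum

theorem matchingBipartiteGraph_degree_and_triangles_general {α : Type*} [Fintype α] [DecidableEq α]
    {G H : SimpleGraph α} (hG : G.IsRegularOfDegree 1) (hH : H.IsRegularOfDegree 1) :
    (∀ v, (crownSum G H).degree v = Fintype.card α) ∧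
      #((crownSum G H).cliqueFinset 3) = Fintype.card α * (Fintype.card α - 2) := by
  have hno_triangle {K : SimpleGraph α} (hK : K.IsRegularOfDegree 1) : K.cliqueFinset 3 = ∅ :=
    cliqueFinset_eq_empty_iff.2 (cliqueFree_of_degree_le fun v ↦ (hK v).le)
  have hedges {K : SimpleGraph α} (hK : K.IsRegularOfDegree 1) :
      Fintype.card α = 2 * #(K.cliqueFinset 2) := by
    simp only [← sum_degree_eq_two_mul_card_cliqueFinset_two, hK.degree_eq, sum_const, card_univ,
      smul_eq_mul, mul_one]
  constructor
  · intro v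
    have hpos : 0 < Fintype.card α := Fintype.card_pos_iff.2 ⟨v.elim id id⟩
    rw [(crownSum.isRegularOfDegree hG hH).degree_eq, Nat.add_sub_cancel' hpos]
  · have htotal : #(G.cliqueFinset 2) + #(H.cliqueFinset 2) = Fintype.card α := by
      have := hedges hG
      have := hedges hH
      lia
    rw [crownSum.card_cliqueFinset_three, hno_triangle hG, hno_triangle hH, htotal, card_empty,
      zero_add, zero_add]

/-- The graph on `Fin n` whose edges are the pairs `{2a, 2a + 1}`: the graph that
`matchingBipartiteGraph n` induces on either side. -/
def consecutivePairs (n : ℕ) : SimpleGraph (Fin n) :=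
  fromRel fun i j ↦ ∃ a : ℕ, i.val = 2 * a ∧ j.val = 2 * a + 1

theorem consecutivePairs_adj_iff {n : ℕ} {i j : Fin n} :
    (consecutivePairs n).Adj i j ↔ i ≠ j ∧ i.val / 2 = j.val / 2 := by
  rw [consecutivePairs, fromRel_adj]
  refine and_congr_right fun hij ↦ ⟨by lia, fun h ↦ ?_⟩
  have hij : i.val ≠ j.val := Fin.val_ne_of_ne hij
  rcases hij.lt_or_gt with hlt | hlt
  · exact .inl ⟨i / 2, by lia, by lia⟩
  · exact .inr ⟨i / 2, by lia, by lia⟩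

theorem consecutivePairs_isRegularOfDegree_one {n : ℕ} (hn : Even n) :
    (consecutivePairs n).IsRegularOfDegree 1 := by
  intro i
  have := i.isLt
  simp only [degree_eq_one_iff_existsUnique_adj, consecutivePairs_adj_iff, ne_eq, Fin.ext_iff]
  obtain ⟨m, rfl⟩ := hn
  rcases Nat.even_or_odd' i.val with ⟨a, ha | ha⟩
  · exact ⟨⟨2 * a + 1, by lia⟩, by dsimp only; lia, fun j hj ↦ Fin.ext (by dsimp only; lia)⟩
  · exact ⟨⟨2 * a, by lia⟩, by dsimp only; lia, fun j hj ↦ Fin.ext (by dsimp only; lia)⟩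

theorem matchingBipartiteGraph_eq_crownSum (n : ℕ) :
    matchingBipartiteGraph n = crownSum (consecutivePairs n) (consecutivePairs n) := by
  ext (i | i) (j | j) <;>
    simp [matchingBipartiteGraph, matchingBipartiteRel, consecutivePairs, eq_comm]

/-- For even `n ≥ 4`, every vertex of the graph has degree `n` and the number
of triangles is exactly `n · (n − 2)`. -/
theorem matchingBipartiteGraph_degree_and_triangles
    (n : ℕ) (hn : Even n) (hn4 : 4 ≤ n) :
    (∀ v, (matchingBipartiteGraph n).degree v = n) ∧
      ((matchingBipartiteGraph n).cliqueFinset 3).card = n * (n - 2) := by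
  have hpairs := consecutivePairs_isRegularOfDegree_one hn
  rw [matchingBipartiteGraph_eq_crownSum]
  simpa only [Fintype.card_fin] using
    matchingBipartiteGraph_degree_and_triangles_general hpairs hpairs
end

section
/- Let n and r be natural numbers with 1 ≤ r and 2r ≤ n. Let M be a bipartite graph between two disjoint copies L and R of Fin n in which every vertex has degree exactly r, let B_L be an r-regular simple graph on L, and let B_R be an r-regular simple graph on R. Let G be the simple graph on L ∪ R whose edges are: all cross pairs (u, w) with u ∈ L, w ∈ R that are NOT edges of M, together with all edges of B_L and all edges of B_R. Then the number of triangles of G is at least r·n·(n − 2r). -/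
/-!
An edge of `B_L` or `B_R` spans a triangle with every vertex on the opposite side adjacent to both
of its ends. Each end has only `r` non-neighbours there, so at least `n - 2 * r` vertices qualify.
A triangle obtained in this way has two vertices on the side of its edge and one on the other
side, so it determines the edge and the apex; as `B_L` and `B_R` have `r * n` edges in total, this
gives `r * n * (n - 2 * r)` distinct triangles.
-/

open Finset SimpleGraph

open scoped Classical

/-- The graph on `L ⊕ R` (two copies of `Fin n`) whose edges are all cross
pairs not in the bipartite graph `M`, together with the edges of `B_L` inside
the left side and the edges of `B_R` inside the right side. -/
def lowerBoundGraph (n : ℕ) (M : Fin n → Fin n → Prop)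
    (BL BR : SimpleGraph (Fin n)) : SimpleGraph (Fin n ⊕ Fin n) :=
  SimpleGraph.fromRel (fun x y =>
    match x, y with
    | Sum.inl i, Sum.inr j => ¬ M i j
    | Sum.inl i, Sum.inl j => BL.Adj i j
    | Sum.inr i, Sum.inr j => BR.Adj i j
    | Sum.inr _, Sum.inl _ => False)

section Counting

variable {α β : Type*}

theorem card_le_card_filter_forall_mem_add [Fintype β] (p : α → β → Prop)
    [DecidableRel p] {r : ℕ} (S : Finset α) [DecidablePred fun b ↦ ∀ a ∈ S, p a b]
    (hr : ∀ a ∈ S, #{b | ¬p a b} ≤ r) :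
    Fintype.card β ≤ #{b | ∀ a ∈ S, p a b} + #S * r := by
  have hcompl : ({b | ¬∀ a ∈ S, p a b} : Finset β) = S.biUnion fun a ↦ {b | ¬p a b} := by
    ext b
    simp
  calc Fintype.card β = #{b | ∀ a ∈ S, p a b} + #{b | ¬∀ a ∈ S, p a b} :=
        (card_filter_add_card_filter_not _).symm
    _ ≤ #{b | ∀ a ∈ S, p a b} + #S * r := by
        rw [hcompl]
        gcongr
        exact card_biUnion_le_card_mul S _ r hr

end Counting

section Cliques

variable {V α β : Type*}

theorem card_cliqueFinset_two [Fintype V] [DecidableEq V] (G : SimpleGraph V)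
    [DecidableRel G.Adj] : #(G.cliqueFinset 2) = #G.edgeFinset := by
  symm
  refine card_nbij Sym2.toFinset ?_ ?_ ?_
  · rintro ⟨u, v⟩ he
    have huv : G.Adj u v := by simpa using he
    simp [isNClique_iff, huv, huv.ne, Sym2.toFinset_mk_eq]
  · intro e _ e' _ h
    exact Sym2.ext fun v ↦ by simpa using Finset.ext_iff.1 h v
  · intro T hT
    obtain ⟨hclique, hcard⟩ := mem_cliqueFinset_iff.1 (mem_coe.1 hT)
    obtain ⟨u, v, huv, rfl⟩ := card_eq_two.1 hcard
    exact ⟨s(u, v), by simpa [huv] using hclique, by simp [Sym2.toFinset_mk_eq]⟩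

theorem two_mul_card_edgeFinset_of_isRegularOfDegree [Fintype V] {G : SimpleGraph V}
    [DecidableRel G.Adj] {r : ℕ} (hG : G.IsRegularOfDegree r) :
    2 * #G.edgeFinset = r * Fintype.card V := by
  simp [← sum_degrees_eq_twice_card_edges, hG.degree_eq, mul_comm r]

theorem card_edgeFinset_add_card_edgeFinset_of_isRegularOfDegree [Fintype V]
    {G H : SimpleGraph V} [DecidableRel G.Adj] [DecidableRel H.Adj] {r : ℕ}
    (hG : G.IsRegularOfDegree r) (hH : H.IsRegularOfDegree r) :
    #G.edgeFinset + #H.edgeFinset = r * Fintype.card V := by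
  linarith [two_mul_card_edgeFinset_of_isRegularOfDegree hG,
    two_mul_card_edgeFinset_of_isRegularOfDegree hH]

/-- The cliques of `G` on `k + l` vertices having exactly `k` vertices in the image of `f` and
exactly `l` in the image of `g`, for embeddings `f` and `g` whose images stand for two disjoint
sides of `G`. Both sides are given by embeddings so that they can be exchanged. -/
def splitCliqueFinset [Fintype V] [DecidableEq V] [Fintype α] [Fintype β] (G : SimpleGraph V)
    [DecidableRel G.Adj] (f : α ↪ V) (g : β ↪ V) (k l : ℕ) : Finset (Finset V) :=
  {T ∈ G.cliqueFinset (k + l) | #{a | f a ∈ T} = k ∧ #{b | g b ∈ T} = l}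

theorem disjoint_splitCliqueFinset_swap [Fintype V] [DecidableEq V] [Fintype α] [Fintype β]
    (G : SimpleGraph V) [DecidableRel G.Adj] (f : α ↪ V) (g : β ↪ V) {k l : ℕ} (hkl : k ≠ l) :
    Disjoint (splitCliqueFinset G f g k l) (splitCliqueFinset G g f k l) := by
  refine disjoint_left.2 fun T hT hT' ↦ hkl ?_
  exact (mem_filter.1 hT).2.1.symm.trans (mem_filter.1 hT').2.2

variable [DecidableEq V] {f : α ↪ V} {g : β ↪ V}

theorem isNClique_insert_map {G : SimpleGraph V} {k : ℕ} {S : Finset α} {v : V}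
    (hS : (G.comap f).IsNClique k S) (hv : ∀ a ∈ S, G.Adj (f a) v) :
    G.IsNClique (k + 1) (insert v (S.map f)) := by
  refine (hS.map.mono (map_comap_le f G)).insert fun u hu ↦ ?_
  obtain ⟨a, ha, rfl⟩ := mem_map.1 hu
  exact (hv a ha).symm

theorem filter_mem_insert_map_left [Fintype α] (hfg : ∀ a b, f a ≠ g b) (S : Finset α) (b : β) :
    ({a | f a ∈ insert (g b) (S.map f)} : Finset α) = S := by
  ext a
  simp [hfg]

theorem filter_mem_insert_map_right [Fintype β] (hfg : ∀ a b, f a ≠ g b) (S : Finset α) (b : β) :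
    ({b' | g b' ∈ insert (g b) (S.map f)} : Finset β) = {b} := by
  ext b'
  simp [hfg]

theorem sum_card_filter_forall_adj_le_card_splitCliqueFinset [Fintype V] [Fintype α]
    [DecidableEq α] [Fintype β] (G : SimpleGraph V) [DecidableRel G.Adj]
    (hfg : ∀ a b, f a ≠ g b) (k : ℕ) :
    ∑ S ∈ (G.comap f).cliqueFinset k, #{b | ∀ a ∈ S, G.Adj (f a) (g b)} ≤
      #(splitCliqueFinset G f g k 1) := by
  rw [← card_sigma]
  refine card_le_card_of_injOn (fun x ↦ insert (g x.2) (x.1.map f)) ?_ ?_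
  · rintro ⟨S, b⟩ hSb
    obtain ⟨hS, hb⟩ := mem_sigma.1 (mem_coe.1 hSb)
    have hclique := mem_cliqueFinset_iff.1 hS
    refine mem_coe.2 <| mem_filter.2 ⟨mem_cliqueFinset_iff.2 ?_, ?_, ?_⟩
    · exact isNClique_insert_map hclique (mem_filter.1 hb).2
    · rw [filter_mem_insert_map_left hfg, hclique.card_eq]
    · rw [filter_mem_insert_map_right hfg, card_singleton]
  · rintro ⟨S, b⟩ - ⟨S', b'⟩ - (h : insert (g b) (S.map f) = insert (g b') (S'.map f))
    have hS : S = S' := by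
      rw [← filter_mem_insert_map_left hfg S b, h, filter_mem_insert_map_left hfg]
    have hb : b = b' := by
      rw [← singleton_inj, ← filter_mem_insert_map_right hfg S b, h,
        filter_mem_insert_map_right hfg]
    rw [hS, hb]

theorem card_cliqueFinset_comap_mul_card_le [Fintype V] [Fintype α] [DecidableEq α] [Fintype β]
    (G : SimpleGraph V) [DecidableRel G.Adj] (hfg : ∀ a b, f a ≠ g b) {r : ℕ}
    (hr : ∀ a, #{b | ¬G.Adj (f a) (g b)} ≤ r) (k : ℕ) :
    #((G.comap f).cliqueFinset k) * Fintype.card β ≤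
      #(splitCliqueFinset G f g k 1) + #((G.comap f).cliqueFinset k) * (k * r) := by
  calc #((G.comap f).cliqueFinset k) * Fintype.card β
      = ∑ _ ∈ (G.comap f).cliqueFinset k, Fintype.card β := by rw [sum_const, smul_eq_mul]
    _ ≤ ∑ S ∈ (G.comap f).cliqueFinset k, (#{b | ∀ a ∈ S, G.Adj (f a) (g b)} + k * r) := by
        refine sum_le_sum fun S hS ↦ ?_
        rw [← (mem_cliqueFinset_iff.1 hS).card_eq]
        exact card_le_card_filter_forall_mem_add _ S fun a _ ↦ hr a
    _ = ∑ S ∈ (G.comap f).cliqueFinset k, #{b | ∀ a ∈ S, G.Adj (f a) (g b)} +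
          #((G.comap f).cliqueFinset k) * (k * r) := by
        rw [sum_add_distrib, sum_const, smul_eq_mul]
    _ ≤ #(splitCliqueFinset G f g k 1) + #((G.comap f).cliqueFinset k) * (k * r) := by
        gcongr
        exact sum_card_filter_forall_adj_le_card_splitCliqueFinset G hfg k

end Cliques

section LowerBoundGraph

variable {n : ℕ} (M : Fin n → Fin n → Prop) (BL BR : SimpleGraph (Fin n))

theorem lowerBoundGraph_adj_inl_inr (i j : Fin n) :
    (lowerBoundGraph n M BL BR).Adj (Sum.inl i) (Sum.inr j) ↔ ¬M i j := by
  simp [lowerBoundGraph]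

theorem lowerBoundGraph_comap_inl :
    (lowerBoundGraph n M BL BR).comap Function.Embedding.inl = BL := by
  ext i j
  simpa [lowerBoundGraph, BL.adj_comm j i] using Adj.ne

theorem lowerBoundGraph_comap_inr :
    (lowerBoundGraph n M BL BR).comap Function.Embedding.inr = BR := by
  ext i j
  simpa [lowerBoundGraph, BR.adj_comm j i] using Adj.ne

end LowerBoundGraph

-- The error terms stand on the right because subtraction on `ℕ` truncates.
theorem lowerBoundGraph_triangles_ge_general {α β : Type*} [Fintype α] [DecidableEq α]
    [Fintype β] [DecidableEq β] (G : SimpleGraph (α ⊕ β)) [DecidableRel G.Adj] {r s : ℕ}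
    (hr : ∀ a, #{b | ¬G.Adj (Sum.inl a) (Sum.inr b)} ≤ r)
    (hs : ∀ b, #{a | ¬G.Adj (Sum.inl a) (Sum.inr b)} ≤ s) :
    #(G.comap Function.Embedding.inl).edgeFinset * Fintype.card β +
        #(G.comap Function.Embedding.inr).edgeFinset * Fintype.card α ≤
      #(G.cliqueFinset 3) + (#(G.comap Function.Embedding.inl).edgeFinset * (2 * r) +
        #(G.comap Function.Embedding.inr).edgeFinset * (2 * s)) := by
  have hleft := card_cliqueFinset_comap_mul_card_le (f := .inl) (g := .inr) G
    (fun _ _ ↦ Sum.inl_ne_inr) hr 2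
  have hright := card_cliqueFinset_comap_mul_card_le (f := .inr) (g := .inl) G
    (fun _ _ ↦ Sum.inr_ne_inl) (by simpa [G.adj_comm] using hs) 2
  have htriangles : #(splitCliqueFinset G .inl .inr 2 1) + #(splitCliqueFinset G .inr .inl 2 1) ≤
      #(G.cliqueFinset 3) := by
    rw [← card_union_of_disjoint (disjoint_splitCliqueFinset_swap G .inl .inr (by decide))]
    exact card_le_card (union_subset (filter_subset _ _) (filter_subset _ _))
  rw [card_cliqueFinset_two] at hleft hright
  linarith

/-- If `M` is an `r`-regular bipartite graph between the two sides and
`B_L`, `B_R` are `r`-regular graphs on the sides, then the graph obtained from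
`K_{n,n}` by removing the edges of `M` and adding the edges of `B_L` and `B_R`
has at least `r · n · (n − 2r)` triangles. -/
theorem lowerBoundGraph_triangles_ge
    (n r : ℕ) (hr : 1 ≤ r) (hrn : 2 * r ≤ n)
    (M : Fin n → Fin n → Prop)
    (hML : ∀ i, (Finset.univ.filter (fun j => M i j)).card = r)
    (hMR : ∀ j, (Finset.univ.filter (fun i => M i j)).card = r)
    (BL BR : SimpleGraph (Fin n))
    (hBL : ∀ v, BL.degree v = r) (hBR : ∀ v, BR.degree v = r) :
    r * n * (n - 2 * r) ≤ ((lowerBoundGraph n M BL BR).cliqueFinset 3).card := by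
  have hbound := lowerBoundGraph_triangles_ge_general (lowerBoundGraph n M BL BR) (r := r) (s := r)
    (by simp [lowerBoundGraph_adj_inl_inr, hML]) (by simp [lowerBoundGraph_adj_inl_inr, hMR])
  rw [edgeFinset_inj.2 (lowerBoundGraph_comap_inl M BL BR),
    edgeFinset_inj.2 (lowerBoundGraph_comap_inr M BL BR), ← add_mul, ← add_mul,
    card_edgeFinset_add_card_edgeFinset_of_isRegularOfDegree hBL hBR, Fintype.card_fin] at hbound
  rwa [Nat.mul_sub, Nat.sub_le_iff_le_add]
end

section
/- Let s ≥ 2 and p ≥ 1 be natural numbers. Let G₁ be the simple graph on vertex set Fin 4 × Fin s × Fin p (four parts A, B, C, D given by the first coordinate being 0, 1, 2, 3 respectively, each part divided into s blocks of size p by the second coordinate) with the following edges and no others: (0,i,a) is adjacent to (1,j,b) if and only if i ≠ j; (2,i,c) is adjacent to (3,j,d) if and only if i ≠ j; (1,i,b) is adjacent to (2,j,c) if and only if i = j; (3,i,d) is adjacent to (0,j,a) if and only if i = j. Then G₁ is triangle-free, and every vertex of G₁ has degree exactly s·p. -/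
open Finset SimpleGraph

open scoped Classical

/-- The underlying relation of the four-part block graph on
`Fin 4 × Fin s × Fin p`: parts `A, B, C, D` are indicated by the first
coordinate being `0, 1, 2, 3`; `A`–`B` and `C`–`D` are joined completely
except between blocks of equal index, and `B`–`C` and `D`–`A` are joined
exactly between blocks of equal index. -/
def fourPartRel (s p : ℕ) (x y : Fin 4 × Fin s × Fin p) : Prop :=
  (x.1.val = 0 ∧ y.1.val = 1 ∧ x.2.1 ≠ y.2.1) ∨
  (x.1.val = 2 ∧ y.1.val = 3 ∧ x.2.1 ≠ y.2.1) ∨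
  (x.1.val = 1 ∧ y.1.val = 2 ∧ x.2.1 = y.2.1) ∨
  (x.1.val = 3 ∧ y.1.val = 0 ∧ x.2.1 = y.2.1)

/-- The four-part block graph `G₁` on `Fin 4 × Fin s × Fin p`. -/
def fourPartGraph (s p : ℕ) : SimpleGraph (Fin 4 × Fin s × Fin p) :=
  SimpleGraph.fromRel (fourPartRel s p)

/-!
Two vertices are adjacent exactly when their part numbers add up modulo `4` to `3` if their block
indices agree, and to `1` if they differ. Both sums are odd, so parity of the part number is a
proper 2-colouring; and once the block and position of a neighbour of a given vertex are chosen,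
its part is determined, so every vertex has `s * p` neighbours.
-/

lemma degree_eq_card_of_existsUnique_adj {V β : Type*} [Fintype β] {G : SimpleGraph V} {v : V}
    [Fintype (G.neighborSet v)] (π : V → β) (h : ∀ b, ∃! w, G.Adj v w ∧ π w = b) :
    G.degree v = Fintype.card β := by
  have bijective_restrict : Function.Bijective fun w : G.neighborSet v ↦ π w :=
    (Function.bijective_iff_existsUnique _).mpr fun b ↦ by
      obtain ⟨w, ⟨adj_w, w_mem_fiber⟩, w_unique⟩ := h b
      exact ⟨⟨w, adj_w⟩, w_mem_fiber, fun u hu ↦ Subtype.ext (w_unique u ⟨u.2, hu⟩)⟩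
  rw [← G.card_neighborSet_eq_degree, Fintype.card_of_bijective bijective_restrict]

section

variable {s p : ℕ}

lemma fourPartGraph_adj_iff {x y : Fin 4 × Fin s × Fin p} :
    (fourPartGraph s p).Adj x y ↔ x.1 + y.1 = if x.2.1 = y.2.1 then 3 else 1 := by
  obtain ⟨k, i, _⟩ := x
  obtain ⟨l, j, _⟩ := y
  by_cases hij : i = j <;> fin_cases k <;> fin_cases l <;>
    simp [fourPartGraph, fourPartRel, hij, eq_comm (a := j)]

lemma fourPartGraph_isBipartite (s p : ℕ) : (fourPartGraph s p).IsBipartite := by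
  have parity_ne_of_add_odd : ∀ k l : Fin 4, k + l = 3 ∨ k + l = 1 → k.val.bodd ≠ l.val.bodd := by
    decide
  have parity_ne_of_adj {x y : Fin 4 × Fin s × Fin p} (adj : (fourPartGraph s p).Adj x y) :
      x.1.val.bodd ≠ y.1.val.bodd :=
    parity_ne_of_add_odd x.1 y.1 (fourPartGraph_adj_iff.mp adj ▸ ite_eq_or_eq _ _ _)
  exact (Coloring.mk (fun x : Fin 4 × Fin s × Fin p ↦ x.1.val.bodd) parity_ne_of_adj).colorable

lemma fourPartGraph_existsUnique_adj_snd_eq (x : Fin 4 × Fin s × Fin p) (q : Fin s × Fin p) :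
    ∃! y, (fourPartGraph s p).Adj x y ∧ y.2 = q := by
  refine ⟨((if x.2.1 = q.1 then 3 else 1) - x.1, q),
    ⟨fourPartGraph_adj_iff.mpr (add_sub_cancel _ _), rfl⟩, ?_⟩
  rintro ⟨l, _⟩ ⟨adj, rfl⟩
  exact Prod.ext (eq_sub_of_add_eq' (fourPartGraph_adj_iff.mp adj)) rfl

lemma fourPartGraph_degree (x : Fin 4 × Fin s × Fin p) : (fourPartGraph s p).degree x = s * p := by
  rw [degree_eq_card_of_existsUnique_adj Prod.snd (fourPartGraph_existsUnique_adj_snd_eq x),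
    Fintype.card_prod, Fintype.card_fin, Fintype.card_fin]

end

/-- For `s ≥ 2` and `p ≥ 1`, the four-part block graph `G₁` is triangle-free
and every vertex has degree exactly `s · p`. -/
theorem fourPartGraph_triangleFree_and_degree
    (s p : ℕ) (hs : 2 ≤ s) (hp : 1 ≤ p) :
    (fourPartGraph s p).CliqueFree 3 ∧
      ∀ v, (fourPartGraph s p).degree v = s * p := by
  exact ⟨(fourPartGraph_isBipartite s p).cliqueFree (by norm_num), fourPartGraph_degree⟩
end

section
/- Let s ≥ 4 and p ≥ 1 be natural numbers, and let G₁ be the four-part graph on Fin 4 × Fin s × Fin p defined by: (0,i,a) ~ (1,j,b) iff i ≠ j; (2,i,c) ~ (3,j,d) iff i ≠ j; (1,i,b) ~ (2,j,c) iff i = j; (3,i,d) ~ (0,j,a) iff i = j; and no other edges. Let i₁, i₂, i₃, i₄ ∈ Fin s be pairwise distinct indices and let a* = (0,i₁,a), b* = (1,i₂,b), c* = (2,i₃,c), d* = (3,i₄,d) be vertices in the corresponding blocks. Let G₂ be the graph obtained from G₁ by deleting the edges {a*, b*} and {c*, d*} and adding the edges {a*, c*} and {b*, d*}. Then every vertex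 of G₂ has degree exactly s·p, and the number of triangles of G₂ is exactly 4·p. -/
open Finset SimpleGraph

open scoped Classical

/-! A 2-switch preserves degrees, so `G₂` inherits the `s * p`-regularity of `G₁`: each pair
`(block, position)` occurs in exactly one of the two parts next to a given vertex as a neighbour.
`G₁` is bipartite (parts of even versus odd index) and the green edges `ac`, `bd` lie inside the two
sides, so every triangle of the switched graph contains a green edge. As `ad` and `bc` are not
edges, the number of triangles on each green edge is the number of common neighbours of its ends in
`G₁`, which is `2 * p`. -/

section TwoSwitch

variable {V : Type*} {G : SimpleGraph V} {a b c d : V}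

/-- The 2-switch of `G` which replaces the edges `ab` and `cd` by `ac` and `bd`. It is defined for
arbitrary vertices; lemmas assume that these are in the expected position. -/
def twoSwitch (G : SimpleGraph V) (a b c d : V) : SimpleGraph V :=
  G.deleteEdges {s(a, b), s(c, d)} ⊔ SimpleGraph.fromEdgeSet {s(a, c), s(b, d)}

lemma twoSwitch_adj {x y : V} :
    (twoSwitch G a b c d).Adj x y ↔
      G.Adj x y ∧ s(x, y) ≠ s(a, b) ∧ s(x, y) ≠ s(c, d) ∨
        (s(x, y) = s(a, c) ∨ s(x, y) = s(b, d)) ∧ x ≠ y := by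
  simp only [twoSwitch, sup_adj, deleteEdges_adj, fromEdgeSet_adj, Set.mem_insert_iff,
    Set.mem_singleton_iff, not_or, ne_eq]

lemma twoSwitch_swap_edges : twoSwitch G c d a b = twoSwitch G a b c d := by
  simp only [twoSwitch, Set.pair_comm s(c, d), Sym2.eq_swap (a := c) (b := a),
    Sym2.eq_swap (a := d) (b := b)]

lemma twoSwitch_reverse_edges : twoSwitch G b a d c = twoSwitch G a b c d := by
  simp only [twoSwitch, Set.pair_comm s(b, d), Sym2.eq_swap (a := b) (b := a),
    Sym2.eq_swap (a := d) (b := c)]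

variable [Fintype V]

lemma neighborFinset_twoSwitch_of_ne {x : V} (ha : x ≠ a) (hb : x ≠ b) (hc : x ≠ c) (hd : x ≠ d) :
    (twoSwitch G a b c d).neighborFinset x = G.neighborFinset x := by
  ext y
  simp [twoSwitch_adj, ha, hb, hc, hd]

lemma neighborFinset_twoSwitch_left [DecidableEq V] (ne_ab : a ≠ b) (ne_ac : a ≠ c)
    (ne_ad : a ≠ d) :
    (twoSwitch G a b c d).neighborFinset a = insert c ((G.neighborFinset a).erase b) := by
  ext y
  simp only [mem_neighborFinset, twoSwitch_adj, Finset.mem_insert, Finset.mem_erase, Sym2.eq_iff]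
  grind

lemma degree_twoSwitch_left (hab : G.Adj a b) (hac : ¬G.Adj a c) (ne_ac : a ≠ c) (ne_ad : a ≠ d) :
    (twoSwitch G a b c d).degree a = G.degree a := by
  have hb : b ∈ G.neighborFinset a := (G.mem_neighborFinset a b).2 hab
  have hc : c ∉ (G.neighborFinset a).erase b := by simp [hac]
  rw [← card_neighborFinset_eq_degree, neighborFinset_twoSwitch_left hab.ne ne_ac ne_ad,
    card_insert_of_notMem hc, card_erase_add_one hb, card_neighborFinset_eq_degree]

theorem degree_twoSwitch (hab : G.Adj a b) (hcd : G.Adj c d) (hac : ¬G.Adj a c)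
    (hbd : ¬G.Adj b d) (ne_ac : a ≠ c) (ne_bd : b ≠ d) (x : V) :
    (twoSwitch G a b c d).degree x = G.degree x := by
  have ne_ad : a ≠ d := by rintro rfl; exact hac hcd.symm
  have ne_bc : b ≠ c := by rintro rfl; exact hac hab
  obtain rfl | ha := eq_or_ne x a
  · exact degree_twoSwitch_left hab hac ne_ac ne_ad
  obtain rfl | hb := eq_or_ne x b
  · rw [← twoSwitch_reverse_edges]
    exact degree_twoSwitch_left hab.symm hbd ne_bd ne_bc
  obtain rfl | hc := eq_or_ne x c
  · rw [← twoSwitch_swap_edges]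
    exact degree_twoSwitch_left hcd (mt G.adj_symm hac) ne_ac.symm ne_bc.symm
  obtain rfl | hd := eq_or_ne x d
  · rw [← twoSwitch_swap_edges, ← twoSwitch_reverse_edges]
    exact degree_twoSwitch_left hcd.symm (mt G.adj_symm hbd) ne_bd.symm ne_ad.symm
  rw [← card_neighborFinset_eq_degree, neighborFinset_twoSwitch_of_ne ha hb hc hd,
    card_neighborFinset_eq_degree]

lemma neighborFinset_inter_twoSwitch [DecidableEq V] (ne_ab : a ≠ b) (ne_ac : a ≠ c)
    (ne_ad : a ≠ d) (ne_cd : c ≠ d) (ne_bc : b ≠ c) (had : ¬G.Adj a d) (hbc : ¬G.Adj b c) :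
    (twoSwitch G a b c d).neighborFinset a ∩ (twoSwitch G a b c d).neighborFinset c =
      G.neighborFinset a ∩ G.neighborFinset c := by
  rw [neighborFinset_twoSwitch_left ne_ab ne_ac ne_ad, ← twoSwitch_swap_edges,
    neighborFinset_twoSwitch_left ne_cd ne_ac.symm ne_bc.symm]
  ext y
  simp only [Finset.mem_inter, Finset.mem_insert, Finset.mem_erase, mem_neighborFinset]
  grind [SimpleGraph.irrefl, SimpleGraph.adj_comm]

end TwoSwitch

section Triangles

variable {V : Type*} {G : SimpleGraph V} {a b c d : V}

lemma mem_of_isNClique_three_twoSwitch (hG : G.IsBipartite) {t : Finset V}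
    (ht : (twoSwitch G a b c d).IsNClique 3 t) : a ∈ t ∧ c ∈ t ∨ b ∈ t ∧ d ∈ t := by
  obtain ⟨color⟩ := hG
  obtain ⟨x, hx, y, hy, ne_xy, same_color⟩ : ∃ x ∈ t, ∃ y ∈ t, x ≠ y ∧ color x = color y :=
    exists_ne_map_eq_of_card_lt_of_maps_to (t := Finset.univ) (by simp [ht.card_eq]) (by simp)
  have not_adj : ¬G.Adj x y := fun h ↦ color.valid h same_color
  have green : s(x, y) = s(a, c) ∨ s(x, y) = s(b, d) := by
    simpa [twoSwitch_adj, not_adj, ne_xy] using ht.isClique hx hy ne_xy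
  simp only [Sym2.eq_iff] at green
  grind

variable [Fintype V] [DecidableEq V]

lemma card_filter_cliqueFinset_three_of_adj {u v : V} (huv : G.Adj u v) :
    #{t ∈ G.cliqueFinset 3 | u ∈ t ∧ v ∈ t} = #(G.neighborFinset u ∩ G.neighborFinset v) := by
  symm
  refine card_bij (fun w _ ↦ {u, v, w}) (fun w hw ↦ ?_) (fun w hw w' _ h ↦ ?_) (fun t ht ↦ ?_)
  · simpa [mem_cliqueFinset_iff, is3Clique_triple_iff, huv] using hw
  · have hmem : w ∈ ({u, v, w'} : Finset V) := h ▸ by simp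
    simp only [Finset.mem_inter, mem_neighborFinset] at hw
    simpa [hw.1.ne', hw.2.ne'] using hmem
  · simp only [Finset.mem_filter, mem_cliqueFinset_iff] at ht
    obtain ⟨ht, hu, hv⟩ := ht
    have hpair : {u, v} ⊆ t := by simp [insert_subset_iff, hu, hv]
    obtain ⟨w, hw⟩ : ∃ w, t \ {u, v} = {w} := by
      rw [← card_eq_one, card_sdiff_of_subset hpair, ht.card_eq, card_pair huv.ne]
    obtain rfl : {u, v, w} = t := by
      rw [← union_sdiff_of_subset hpair, hw, insert_union, singleton_union]
    have hadj := is3Clique_triple_iff.1 ht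
    exact ⟨w, by simp [hadj], rfl⟩

theorem card_cliqueFinset_three_twoSwitch (hG : G.IsBipartite) (hab : G.Adj a b)
    (hcd : G.Adj c d) (had : ¬G.Adj a d) (hbc : ¬G.Adj b c) (ne_ad : a ≠ d) (ne_bc : b ≠ c) :
    #((twoSwitch G a b c d).cliqueFinset 3) =
      #(G.neighborFinset a ∩ G.neighborFinset c) + #(G.neighborFinset b ∩ G.neighborFinset d) := by
  have ne_ac : a ≠ c := by rintro rfl; exact had hcd
  have ne_bd : b ≠ d := by rintro rfl; exact had hab
  have adj_ac : (twoSwitch G a b c d).Adj a c := twoSwitch_adj.2 (.inr ⟨.inl rfl, ne_ac⟩)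
  have adj_bd : (twoSwitch G a b c d).Adj b d := twoSwitch_adj.2 (.inr ⟨.inr rfl, ne_bd⟩)
  have common_ac := neighborFinset_inter_twoSwitch hab.ne ne_ac ne_ad hcd.ne ne_bc had hbc
  have common_bd := neighborFinset_inter_twoSwitch hab.ne' ne_bd ne_bc hcd.ne' ne_ad hbc had
  rw [twoSwitch_reverse_edges] at common_bd
  rw [← common_ac, ← common_bd, ← card_filter_cliqueFinset_three_of_adj adj_ac,
    ← card_filter_cliqueFinset_three_of_adj adj_bd, ← card_union_of_disjoint, ← filter_or,
    filter_true_of_mem]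
  · exact fun t ht ↦ mem_of_isNClique_three_twoSwitch hG (mem_cliqueFinset_iff.1 ht)
  · refine disjoint_filter.2 fun t ht hac hbd ↦ ?_
    have four_le : #{a, b, c, d} ≤ #t :=
      card_le_card (by simp [insert_subset_iff, hac, hbd])
    rw [(mem_cliqueFinset_iff.1 ht).card_eq] at four_le
    simp [hab.ne, ne_ac, ne_ad, ne_bc, ne_bd, hcd.ne] at four_le

end Triangles

section FourPartGraph

variable {s p : ℕ}

-- The parts form a 4-cycle: `t.rev` is the part joined to part `t` along blocks of equal index, and
-- `t.rev + 2` (taken modulo 4) is the part joined to it along blocks of distinct index.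
lemma fourPartGraph_adj {t u : Fin 4} {i j : Fin s} {x y : Fin p} :
    (fourPartGraph s p).Adj (t, i, x) (u, j, y) ↔ u = if i = j then t.rev else t.rev + 2 := by
  simp only [fourPartGraph, fromRel_adj, fourPartRel]
  by_cases hij : i = j <;> fin_cases t <;> fin_cases u <;> simp [hij, eq_comm (a := j)]

lemma isBipartite_fourPartGraph : (fourPartGraph s p).IsBipartite := by
  refine ⟨Coloring.mk (fun v ↦ Fin.ofNat 2 v.1.val) ?_⟩
  rintro ⟨t, i, x⟩ ⟨u, j, y⟩ h
  have parity_ne : ∀ t : Fin 4,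
      Fin.ofNat 2 t.val ≠ Fin.ofNat 2 t.rev.val ∧
        Fin.ofNat 2 t.val ≠ Fin.ofNat 2 (t.rev + 2).val := by
    decide
  rw [fourPartGraph_adj.1 h]
  split_ifs
  exacts [(parity_ne t).1, (parity_ne t).2]

lemma existsUnique_fourPartGraph_adj (v : Fin 4 × Fin s × Fin p) (q : Fin s × Fin p) :
    ∃! t, (fourPartGraph s p).Adj v (t, q) := by
  obtain ⟨u, i, x⟩ := v
  obtain ⟨j, y⟩ := q
  simp only [fourPartGraph_adj, existsUnique_eq]

lemma exists_fourPartGraph_adj_and_adj_iff {i j : Fin s} (hij : i ≠ j) (t : Fin 4) (x y : Fin p)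
    (q : Fin s × Fin p) :
    (∃ u, (fourPartGraph s p).Adj (t, i, x) (u, q) ∧ (fourPartGraph s p).Adj (t + 2, j, y) (u, q)) ↔
      q.1 = i ∨ q.1 = j := by
  obtain ⟨k, z⟩ := q
  have rev_add_two : (t + 2).rev = t.rev + 2 := by decide +revert
  have rev_add_four : t.rev + 2 + 2 = t.rev := by decide +revert
  simp only [fourPartGraph_adj, rev_add_two, rev_add_four, exists_eq_left]
  grind

lemma injOn_snd_neighborFinset_fourPartGraph (v : Fin 4 × Fin s × Fin p) :
    Set.InjOn Prod.snd ((fourPartGraph s p).neighborFinset v : Set (Fin 4 × Fin s × Fin p)) := by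
  rintro ⟨u, q⟩ hu ⟨u', _⟩ hu' rfl
  simp only [coe_neighborFinset, mem_neighborSet] at hu hu'
  rw [(existsUnique_fourPartGraph_adj v q).unique hu hu']

lemma isRegularOfDegree_fourPartGraph : (fourPartGraph s p).IsRegularOfDegree (s * p) := by
  intro v
  have himage : ((fourPartGraph s p).neighborFinset v).image Prod.snd = Finset.univ := by
    ext q
    simpa using (existsUnique_fourPartGraph_adj v q).exists
  rw [← card_neighborFinset_eq_degree,
    ← card_image_of_injOn (injOn_snd_neighborFinset_fourPartGraph v), himage]
  simp

lemma card_neighborFinset_inter_fourPartGraph {i j : Fin s} (hij : i ≠ j) (t : Fin 4)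
    (x y : Fin p) :
    #((fourPartGraph s p).neighborFinset (t, i, x) ∩
      (fourPartGraph s p).neighborFinset (t + 2, j, y)) = 2 * p := by
  have himage : ((fourPartGraph s p).neighborFinset (t, i, x) ∩
      (fourPartGraph s p).neighborFinset (t + 2, j, y)).image Prod.snd =
        ({i, j} : Finset (Fin s)) ×ˢ Finset.univ := by
    ext q
    simpa using exists_fourPartGraph_adj_and_adj_iff hij t x y q
  rw [← card_image_of_injOn ((injOn_snd_neighborFinset_fourPartGraph (t, i, x)).mono
    (Finset.coe_subset.2 inter_subset_left)), himage, card_product, card_pair hij, card_fin]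

end FourPartGraph

/-- `G₂` is obtained from `G₁` by deleting the two purple edges
`{a*, b*}`, `{c*, d*}` and adding the two green edges `{a*, c*}`, `{b*, d*}`,
where `a* ∈ A`, `b* ∈ B`, `c* ∈ C`, `d* ∈ D` lie in blocks with pairwise
distinct indices. Then every vertex has degree `s · p` and the number of
triangles is exactly `4 · p`. -/
theorem modifiedFourPartGraph_degree_and_triangles
    (s p : ℕ) (hs : 4 ≤ s) (hp : 1 ≤ p)
    (i₁ i₂ i₃ i₄ : Fin s)
    (h12 : i₁ ≠ i₂) (h13 : i₁ ≠ i₃) (h14 : i₁ ≠ i₄)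
    (h23 : i₂ ≠ i₃) (h24 : i₂ ≠ i₄) (h34 : i₃ ≠ i₄)
    (a b c d : Fin p) :
    let astar : Fin 4 × Fin s × Fin p := (0, i₁, a)
    let bstar : Fin 4 × Fin s × Fin p := (1, i₂, b)
    let cstar : Fin 4 × Fin s × Fin p := (2, i₃, c)
    let dstar : Fin 4 × Fin s × Fin p := (3, i₄, d)
    let G₂ : SimpleGraph (Fin 4 × Fin s × Fin p) :=
      ((fourPartGraph s p).deleteEdges {s(astar, bstar), s(cstar, dstar)}) ⊔
        SimpleGraph.fromEdgeSet {s(astar, cstar), s(bstar, dstar)}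
    (∀ v, G₂.degree v = s * p) ∧ (G₂.cliqueFinset 3).card = 4 * p := by
  intro astar bstar cstar dstar G₂
  let G₁ := fourPartGraph s p
  have adj_ab : G₁.Adj astar bstar := by simp [G₁, fourPartGraph_adj, astar, bstar, h12]
  have adj_cd : G₁.Adj cstar dstar := by simp [G₁, fourPartGraph_adj, cstar, dstar, h34]
  have not_adj_ac : ¬G₁.Adj astar cstar := by simp [G₁, fourPartGraph_adj, astar, cstar, h13]
  have not_adj_bd : ¬G₁.Adj bstar dstar := by simp [G₁, fourPartGraph_adj, bstar, dstar, h24]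
  have not_adj_ad : ¬G₁.Adj astar dstar := by simp [G₁, fourPartGraph_adj, astar, dstar, h14]
  have not_adj_bc : ¬G₁.Adj bstar cstar := by simp [G₁, fourPartGraph_adj, bstar, cstar, h23]
  constructor
  · intro v
    calc G₂.degree v = G₁.degree v :=
          degree_twoSwitch adj_ab adj_cd not_adj_ac not_adj_bd (by simp [astar, cstar])
            (by simp [bstar, dstar]) v
      _ = s * p := isRegularOfDegree_fourPartGraph v
  · calc #(G₂.cliqueFinset 3)
        = #(G₁.neighborFinset astar ∩ G₁.neighborFinset cstar) +
            #(G₁.neighborFinset bstar ∩ G₁.neighborFinset dstar) :=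
          card_cliqueFinset_three_twoSwitch isBipartite_fourPartGraph adj_ab adj_cd not_adj_ad
            not_adj_bc (by simp [astar, dstar]) (by simp [bstar, cstar])
      _ = 2 * p + 2 * p := congrArg₂ (· + ·) (card_neighborFinset_inter_fourPartGraph h13 0 a c)
          (card_neighborFinset_inter_fourPartGraph h24 1 b d)
      _ = 4 * p := by ring
end
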